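/- Assume the sieve setup, that sup_d |λ_d| ≤ (log X)^{k/2}, and additionally that the prime p0 satisfies the level-of-distribution bound: for all x ≤ 3(log X)^{1/3}·X, ∑_{q < x^{2/5}, gcd(q, p0) = 1} sup_{(a,q)=1, x' ≤ x} |π(x'; q, a) − π(x')/φ(q)| ≤ x·exp(−c0·√(log x)) for an absolute constant c0 > 0. Then there exist absolute constants c1, c, C > 0 such that ∑_{X < n ≤ 2X, n ≡ v0 (mod W)} #{1 ≤ i ≤ k : L_i(n) ∈ 𝒮} · w_n ≥ c1 · (X·k / (φ(W)·(log X)^{1/2})) · ∑_{d,e} λ_d λ_e ∏_{p | de} (ν(p) − 1)/(p − 1) − C·X·exp(−c·√(log X)). -/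

import Mathlib

/-- `⟨P3⟩`: positive integers all of whose prime factors are `≡ 3 (mod 4)` (contains 1). -/
def InP3 (n : ℕ) : Prop := ∀ p : ℕ, p.Prime → p ∣ n → p % 4 = 3

/-- `m : ℤ` is a member of `𝒮`, the set of positive integers expressible
as a sum of two squares. -/
def IsSumTwoSquaresZ (m : ℤ) : Prop := 0 < m ∧ ∃ u v : ℤ, m = u ^ 2 + v ^ 2

/-- `piR x` is the number of primes `p ≤ x`. -/
noncomputable def piR (x : ℝ) : ℕ := {p : ℕ | p.Prime ∧ (p : ℝ) ≤ x}.ncard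

/-- `piAP x q a` is the number of primes `p ≤ x` with `p ≡ a (mod q)`. -/
noncomputable def piAP (x : ℝ) (q a : ℕ) : ℕ :=
  {p : ℕ | p.Prime ∧ (p : ℝ) ≤ x ∧ p % q = a % q}.ncard

/-- `Eerr x q = sup_{(a,q)=1, x' ≤ x} |π(x';q,a) − π(x')/φ(q)|`. -/
noncomputable def Eerr (x : ℝ) (q : ℕ) : ℝ :=
  sSup {r : ℝ | ∃ a : ℕ, ∃ x' : ℝ, Nat.Coprime a q ∧ x' ≤ x ∧
    r = |(piAP x' q a : ℝ) - (piR x' : ℝ) / (Nat.totient q : ℝ)|}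

/-!
Fix `i` and write `L_i(n) = g (A n + B)` with `gcd(A, B) = 1`; admissibility and `gcd(2, a_i) = 1`
force `g ∈ ⟨P1⟩`, the integers all of whose prime factors are `≡ 1 (mod 4)`. If `A n + B = m p` with
`m ∈ ⟨P1⟩` and `p ≡ 1 (mod 4)` prime, then `L_i(n) ∈ 𝒮`, and distinct `m ≤ X^(1/10)` give disjoint
sets of `n`, so `∑_m ∑_{n : A n + B = m p} w_n` is a lower bound for the sum over `L_i(n) ∈ 𝒮`.

For fixed `m`, expand the square in `w_n`: the inner sum becomes a sum over `r = [d, e]` of counts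
of primes in residue classes modulo `4 A W r`. The number of residues at `p ∣ r` with `L_i`
invertible is `ν(p) - 1`, whence the main term `∏ (ν(p) - 1) / (p - 1)`; the level of distribution,
applied to `∑_r (3 k)^ω(r) E(x, 4 A W r)`, bounds the error.

Each `m` contributes `≫ X / (φ(W) m log X)`. Since `∑_{m ≤ N, m ∈ ⟨P1⟩} 1 / m ≫ √(log N)`, the sum
over `m` turns `1 / log X` into `1 / √(log X)`. The lower bound for this sum is obtained from
`∑_{n ≤ N} r(n) / n ≫ log N` with `r = 1 * χ₄`, whose multiplicative structure compares it with the
square of the sum over `⟨P1⟩`. If the quadratic form is negative, the bound is trivial.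
-/

section Chebyshev

open Finset Filter Asymptotics ArithmeticFunction

open scoped Topology Nat Chebyshev

theorem log_factorial_eq_sum_vonMangoldt {N M : ℕ} (h : N ≤ M) :
    Real.log N ! = ∑ n ∈ Ioc 0 M, vonMangoldt n * (N / n : ℕ) := by
  have hlog : Real.log N ! = ∑ n ∈ Ioc 0 N, Real.log n := by
    rw [← prod_Ico_id_eq_factorial, Nat.cast_prod, Real.log_prod]
    · rfl
    · exact fun n hn ↦ Nat.cast_ne_zero.2 (zero_lt_one.trans_le (mem_Ico.1 hn).1).ne'
  have hconv := sum_Ioc_mul_zeta_eq_sum vonMangoldt N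
  simp only [vonMangoldt_mul_zeta, log_apply] at hconv
  rw [hlog, hconv]
  refine sum_subset (Ioc_subset_Ioc_right h) fun n hn hn' ↦ ?_
  rw [mem_Ioc] at hn hn'
  rw [Nat.div_eq_of_lt (by omega), Nat.cast_zero, mul_zero]

/-- Chebyshev's combination `∑ μ_d log ⌊N / d⌋!` with `μ_1 = μ_30 = 1`, `μ_2 = μ_3 = μ_5 = -1`,
whose coefficients satisfy `∑ μ_d / d = 0`. -/
noncomputable def chebyshevSum (N : ℕ) : ℝ :=
  Real.log N ! - Real.log (N / 2)! - Real.log (N / 3)! - Real.log (N / 5)! + Real.log (N / 30)!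

/-- The constant `A = log (2^(1/2) 3^(1/3) 5^(1/5) / 30^(1/30))` in Chebyshev's bounds
`A - o(1) ≤ ψ x / x ≤ 6 A / 5 + o(1)`. -/
noncomputable def chebyshevConst : ℝ :=
  Real.log 2 / 2 + Real.log 3 / 3 + Real.log 5 / 5 - Real.log 30 / 30

theorem chebyshevConst_pos : 0 < chebyshevConst := by
  have h30 : Real.log 30 = Real.log 2 + Real.log 3 + Real.log 5 := by
    rw [← Real.log_mul (by norm_num) (by norm_num), ← Real.log_mul (by norm_num) (by norm_num)]
    norm_num
  have h2 : 0 < Real.log 2 := Real.log_pos (by norm_num)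
  have h3 : 0 < Real.log 3 := Real.log_pos (by norm_num)
  have h5 : 0 < Real.log 5 := Real.log_pos (by norm_num)
  rw [chebyshevConst, h30]
  linarith

theorem chebyshevSum_eq_sum_vonMangoldt (N : ℕ) :
    chebyshevSum N = ∑ n ∈ Ioc 0 N, vonMangoldt n *
      ((N / n : ℕ) - (N / n / 2 : ℕ) - (N / n / 3 : ℕ) - (N / n / 5 : ℕ) + (N / n / 30 : ℕ)) := by
  rw [chebyshevSum, log_factorial_eq_sum_vonMangoldt (le_refl N),
    log_factorial_eq_sum_vonMangoldt (Nat.div_le_self N 2),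
    log_factorial_eq_sum_vonMangoldt (Nat.div_le_self N 3),
    log_factorial_eq_sum_vonMangoldt (Nat.div_le_self N 5),
    log_factorial_eq_sum_vonMangoldt (Nat.div_le_self N 30)]
  simp only [mul_add, mul_sub, sum_add_distrib, sum_sub_distrib, Nat.div_right_comm N]

theorem chebyshevSum_le_psi (N : ℕ) : chebyshevSum N ≤ ψ N := by
  rw [chebyshevSum_eq_sum_vonMangoldt, Chebyshev.psi, Nat.floor_natCast]
  refine sum_le_sum fun n _ ↦ mul_le_of_le_one_right vonMangoldt_nonneg ?_
  have h : N / n + N / n / 30 ≤ 1 + N / n / 2 + N / n / 3 + N / n / 5 := by omega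
  have h' := Nat.cast_le (α := ℝ).2 h
  simp only [Nat.cast_add, Nat.cast_one] at h'
  linarith

theorem psi_sub_psi_div_six_le_chebyshevSum (N : ℕ) : ψ N - ψ (N / 6 : ℕ) ≤ chebyshevSum N := by
  rw [chebyshevSum_eq_sum_vonMangoldt, Chebyshev.psi, Chebyshev.psi, Nat.floor_natCast,
    Nat.floor_natCast, sub_le_iff_le_add,
    ← sum_sdiff (Ioc_subset_Ioc_right (a := 0) (Nat.div_le_self N 6)),
    ← sum_sdiff (Ioc_subset_Ioc_right (a := 0) (Nat.div_le_self N 6))]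
  have hlarge : ∀ n ∈ Ioc 0 N \ Ioc 0 (N / 6), vonMangoldt n ≤ vonMangoldt n *
      ((N / n : ℕ) - (N / n / 2 : ℕ) - (N / n / 3 : ℕ) - (N / n / 5 : ℕ) + (N / n / 30 : ℕ)) := by
    intro n hn
    rw [Finset.mem_sdiff, mem_Ioc, mem_Ioc] at hn
    have h1 : 1 ≤ N / n := (Nat.one_le_div_iff (by omega)).2 (by omega)
    have h6 : N / n < 6 := (Nat.div_lt_iff_lt_mul (by omega)).2 (by omega)
    have h : 1 + N / n / 2 + N / n / 3 + N / n / 5 ≤ N / n + N / n / 30 := by omega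
    have h' := Nat.cast_le (α := ℝ).2 h
    simp only [Nat.cast_add, Nat.cast_one] at h'
    exact le_mul_of_one_le_right vonMangoldt_nonneg (by linarith)
  have hsmall : 0 ≤ ∑ n ∈ Ioc 0 (N / 6), vonMangoldt n *
      (((N / n : ℕ) : ℝ) - (N / n / 2 : ℕ) - (N / n / 3 : ℕ) - (N / n / 5 : ℕ) +
        (N / n / 30 : ℕ)) := by
    refine sum_nonneg fun n _ ↦ mul_nonneg vonMangoldt_nonneg ?_
    have h : N / n / 2 + N / n / 3 + N / n / 5 ≤ N / n + N / n / 30 := by omega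
    have h' := Nat.cast_le (α := ℝ).2 h
    simp only [Nat.cast_add] at h'
    linarith
  linarith [sum_le_sum hlarge]

theorem log_factorial_le_stirling {n : ℕ} (hn : 1 ≤ n) :
    Real.log n ! ≤ n * Real.log n - n + Real.log n + 1 := by
  induction n, hn using Nat.le_induction with
  | base => simp
  | succ n hn ih =>
    have : (0 : ℝ) < n := by exact_mod_cast hn
    have hlog := Real.one_sub_inv_le_log_of_pos (show (0 : ℝ) < (n + 1) / n by positivity)
    rw [Real.log_div (by positivity) (by positivity), inv_div, one_sub_div (by positivity),
      add_sub_cancel_left, div_le_iff₀ (by positivity)] at hlog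
    rw [Nat.factorial_succ, Nat.cast_mul, Real.log_mul (by positivity) (by positivity)]
    push_cast
    linarith

theorem abs_log_factorial_sub_le {n : ℕ} {x : ℝ} (hnx : n ≤ x) (hxn : x < n + 1) :
    |Real.log n ! - (x * Real.log x - x)| ≤ 2 * Real.log (x + 1) + 2 := by
  have hx : 0 ≤ x := n.cast_nonneg.trans hnx
  have hlog : 0 ≤ Real.log (x + 1) := Real.log_nonneg (by linarith)
  rcases Nat.eq_zero_or_pos n with rfl | hn
  · have hself := Real.self_sub_one_le_mul_log hx
    have hneg := Real.mul_log_nonpos hx (by simpa using hxn.le)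
    rw [Nat.factorial_zero, Nat.cast_one, Real.log_one, abs_le]
    norm_num at hxn
    constructor <;> linarith
  · have hn1 : (1 : ℝ) ≤ n := by exact_mod_cast hn
    have hx0 : 0 < x := by linarith
    have hupper := log_factorial_le_stirling hn
    have hlower := Stirling.le_log_factorial_stirling hn.ne'
    have hpi : 0 ≤ Real.log (2 * Real.pi) := Real.log_nonneg (by linarith [Real.pi_gt_three])
    have hlogn : 0 ≤ Real.log n := Real.log_nonneg hn1
    have hlogx : Real.log x ≤ Real.log (x + 1) := Real.log_le_log hx0 (by linarith)
    have hlognx : Real.log n ≤ Real.log x := Real.log_le_log (by positivity) hnx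
    have htangent : n * (Real.log x - Real.log n) ≤ x - n := by
      have h := Real.log_le_sub_one_of_pos (show (0 : ℝ) < x / n by positivity)
      rw [Real.log_div (by positivity) (by positivity), div_sub_one (by positivity),
        le_div_iff₀ (by positivity)] at h
      linarith
    have hfrac : (x - n) * Real.log x ≤ Real.log x :=
      mul_le_of_le_one_left (by linarith) (by linarith)
    have hfrac' : 0 ≤ (x - n) * Real.log x := mul_nonneg (by linarith) (by linarith)
    have hmono : n * Real.log n ≤ n * Real.log x := by gcongr
    rw [abs_le]
    constructor <;> linarith

theorem abs_chebyshevSum_sub_le {N : ℕ} (hN : 1 ≤ N) :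
    |chebyshevSum N - chebyshevConst * N| ≤ 10 * Real.log (N + 1) + 10 := by
  have hN0 : (0 : ℝ) < N := by exact_mod_cast hN
  have hterm : ∀ j : ℕ, 1 ≤ j →
      |Real.log (N / j)! - (N / j * (Real.log N - Real.log j) - N / j)| ≤
        2 * Real.log (N + 1) + 2 := by
    intro j hj
    have hj0 : (0 : ℝ) < j := by exact_mod_cast hj
    rw [← Real.log_div (by positivity) (by positivity)]
    have hlt : (N : ℝ) / j < (N / j : ℕ) + 1 := by
      rw [div_lt_iff₀ hj0, mul_comm]
      exact_mod_cast Nat.lt_mul_div_succ N hj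
    grw [abs_log_factorial_sub_le Nat.cast_div_le hlt, div_le_self hN0.le (by exact_mod_cast hj)]
  have h1 := hterm 1 le_rfl
  have h2 := hterm 2 (by norm_num)
  have h3 := hterm 3 (by norm_num)
  have h5 := hterm 5 (by norm_num)
  have h30 := hterm 30 (by norm_num)
  norm_num [abs_le] at h1 h2 h3 h5 h30
  rw [chebyshevSum, chebyshevConst, abs_le]
  constructor <;> linarith

theorem chebyshevSum_sub_isLittleO :
    (fun N : ℕ ↦ chebyshevSum N - chebyshevConst * N) =o[atTop] fun N : ℕ ↦ (N : ℝ) := by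
  have hlog : (fun x : ℝ ↦ 10 * Real.log x + 10) =o[atTop] fun x ↦ x :=
    (Real.isLittleO_log_id_atTop.const_mul_left 10).add
      (isLittleO_const_id_atTop (10 : ℝ))
  have hsucc : (fun N : ℕ ↦ (N : ℝ) + 1) =O[atTop] fun N : ℕ ↦ (N : ℝ) :=
    (isBigO_refl _ _).add (isLittleO_const_id_atTop (1 : ℝ)).natCast_atTop.isBigO
  have hbound : (fun N : ℕ ↦ chebyshevSum N - chebyshevConst * N) =O[atTop]
      fun N : ℕ ↦ 10 * Real.log ((N : ℝ) + 1) + 10 := by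
    refine IsBigO.of_bound 1 ((eventually_ge_atTop 1).mono fun N hN ↦ ?_)
    rw [one_mul]
    exact (abs_chebyshevSum_sub_le hN).trans (le_abs_self _)
  have hshift : Tendsto (fun N : ℕ ↦ (N : ℝ) + 1) atTop atTop :=
    tendsto_atTop_add_const_right _ _ tendsto_natCast_atTop_atTop
  exact hbound.trans_isLittleO ((hlog.comp_tendsto hshift).trans_isBigO hsucc)

theorem eventually_le_psi {ε : ℝ} (hε : 0 < ε) :
    ∀ᶠ x in atTop, (chebyshevConst - ε) * x ≤ ψ x := by
  have hN := (chebyshevSum_sub_isLittleO.bound (half_pos hε))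
  filter_upwards [tendsto_nat_floor_atTop.eventually hN, eventually_ge_atTop 0,
    eventually_ge_atTop (2 * chebyshevConst / ε)] with x hx hx0 hxε
  rw [Real.norm_eq_abs, Real.norm_natCast, abs_le] at hx
  rw [div_le_iff₀ hε] at hxε
  have hpsi := chebyshevSum_le_psi ⌊x⌋₊
  have hconst : chebyshevConst * (x - 1) ≤ chebyshevConst * ⌊x⌋₊ :=
    mul_le_mul_of_nonneg_left (Nat.sub_one_lt_floor x).le chebyshevConst_pos.le
  have hfloor : ε / 2 * ⌊x⌋₊ ≤ ε / 2 * x := by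
    gcongr
    exact Nat.floor_le hx0
  rw [Chebyshev.psi_eq_psi_coe_floor]
  linarith

theorem eventually_le_theta {ε : ℝ} (hε : 0 < ε) :
    ∀ᶠ x in atTop, (chebyshevConst - ε) * x ≤ θ x := by
  obtain ⟨C, hC⟩ := Chebyshev.psi_sub_theta_le_mul_sqrt
  have hsqrt : (fun x : ℝ ↦ C * √x) =o[atTop] fun x ↦ x := by
    have h : (fun x : ℝ ↦ C * √x) =o[atTop] fun x : ℝ ↦ √x * √x :=
      ((isLittleO_const_id_atTop C).comp_tendsto Real.tendsto_sqrt_atTop).mul_isBigO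
        (isBigO_refl _ _)
    exact h.congr' .rfl ((eventually_ge_atTop 0).mono fun x hx ↦ Real.mul_self_sqrt hx)
  filter_upwards [eventually_le_psi (half_pos hε), hsqrt.bound (half_pos hε),
    eventually_ge_atTop 0] with x hpsi hx hx0
  rw [Real.norm_of_nonneg hx0] at hx
  linarith [hC x, le_abs_self (C * √x), Real.norm_eq_abs (C * √x)]

theorem exists_psi_le {ε : ℝ} (hε : 0 < ε) :
    ∃ K, ∀ x : ℝ, 0 ≤ x → ψ x ≤ 6 / 5 * (chebyshevConst + ε) * x + K := by
  obtain ⟨N₀, hN₀⟩ := eventually_atTop.1 (chebyshevSum_sub_isLittleO.bound hε)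
  have hpos : 0 < chebyshevConst + ε := add_pos chebyshevConst_pos hε
  have hnat : ∀ N : ℕ, ψ N ≤ 6 / 5 * (chebyshevConst + ε) * N + ψ (max N₀ 1 : ℕ) := by
    intro N
    induction N using Nat.strong_induction_on with
    | _ N ih =>
      rcases le_total N (max N₀ 1) with hN | hN
      · linarith [Chebyshev.psi_mono (Nat.cast_le (α := ℝ).2 hN),
          show 0 ≤ 6 / 5 * (chebyshevConst + ε) * N by positivity]
      · have hsum := hN₀ N (le_of_max_le_left hN)
        rw [Real.norm_eq_abs, Real.norm_natCast, abs_le] at hsum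
        have hrec := psi_sub_psi_div_six_le_chebyshevSum N
        have hdiv := ih (N / 6) (Nat.div_lt_self (le_of_max_le_right hN) (by norm_num))
        have hfloor : 6 / 5 * (chebyshevConst + ε) * (N / 6 : ℕ) ≤
            6 / 5 * (chebyshevConst + ε) * (N / 6) := by
          gcongr
          exact_mod_cast Nat.cast_div_le (α := ℝ) (m := N) (n := 6)
        linarith
  refine ⟨ψ (max N₀ 1 : ℕ), fun x hx ↦ ?_⟩
  rw [Chebyshev.psi_eq_psi_coe_floor]
  refine (hnat _).trans ?_
  gcongr
  exact Nat.floor_le hx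

-- Chebyshev's constants suffice: `3 A > 2 * (6 / 5) A`.
theorem eventually_le_theta_add_sub_theta :
    ∀ᶠ Z in atTop, ∀ Y : ℝ, 0 ≤ Y → Y ≤ 2 * Z →
      chebyshevConst / 4 * Z ≤ θ (Y + Z) - θ Y := by
  have hA := chebyshevConst_pos
  obtain ⟨x₀, hx₀⟩ := eventually_atTop.1 (eventually_le_theta (ε := chebyshevConst / 40)
    (by positivity))
  obtain ⟨K, hK⟩ := exists_psi_le (ε := chebyshevConst / 40) (by positivity)
  filter_upwards [eventually_ge_atTop x₀, eventually_ge_atTop 0,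
    eventually_ge_atTop (8 * K / chebyshevConst)] with Z hZ hZ0 hZK Y hY hYZ
  rw [div_le_iff₀ hA] at hZK
  have hlower := hx₀ (Y + Z) (by linarith)
  have hupper := (Chebyshev.theta_le_psi Y).trans (hK Y hY)
  have hAY : chebyshevConst * Y ≤ chebyshevConst * (2 * Z) := by gcongr
  have hAZ : 0 ≤ chebyshevConst * Z := by positivity
  linarith

/-- The primes in the real interval `(Y₁, Y₂]`. -/
noncomputable def primesIoc (Y₁ Y₂ : ℝ) : Finset ℕ := {p ∈ Ioc ⌊Y₁⌋₊ ⌊Y₂⌋₊ | p.Prime}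

theorem theta_sub_theta_le_card_primesIoc_mul_log {Y₁ Y₂ : ℝ} (h₁ : 0 ≤ Y₁) (h : Y₁ ≤ Y₂) :
    θ Y₂ - θ Y₁ ≤ #(primesIoc Y₁ Y₂) * Real.log Y₂ := by
  have hfloor : ⌊Y₁⌋₊ ≤ ⌊Y₂⌋₊ := Nat.floor_le_floor h
  have hsplit : θ Y₂ = θ Y₁ + ∑ p ∈ primesIoc Y₁ Y₂, Real.log p := by
    simp only [Chebyshev.theta, primesIoc, sum_filter]
    exact (sum_Ioc_consecutive _ (Nat.zero_le _) hfloor).symm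
  rw [hsplit, add_sub_cancel_left, ← nsmul_eq_mul]
  refine sum_le_card_nsmul _ _ _ fun p hp ↦ ?_
  simp only [primesIoc, mem_filter, mem_Ioc] at hp
  exact Real.log_le_log (by exact_mod_cast hp.2.pos)
    ((Nat.le_floor_iff (h₁.trans h)).1 hp.1.2)

theorem exists_le_card_primesIoc : ∃ c > 0, ∀ᶠ Z : ℝ in atTop, ∀ Y : ℝ, 0 ≤ Y → Y ≤ 2 * Z →
    c * Z / Real.log (3 * Z) ≤ #(primesIoc Y (Y + Z)) := by
  refine ⟨chebyshevConst / 4, div_pos chebyshevConst_pos (by norm_num), ?_⟩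
  filter_upwards [eventually_le_theta_add_sub_theta, eventually_ge_atTop 1] with Z hZ hZ1 Y hY hYZ
  rw [div_le_iff₀ (Real.log_pos (by linarith))]
  refine (hZ Y hY hYZ).trans ((theta_sub_theta_le_card_primesIoc_mul_log hY (by linarith)).trans ?_)
  gcongr
  linarith

end Chebyshev

section ReciprocalSums

open Finset ArithmeticFunction

open scoped ArithmeticFunction.zeta

/-- `⟨P1⟩`: positive integers all of whose prime factors are `≡ 1 (mod 4)`, the analogue of `InP3`
for the other odd residue class. -/
def InP1 (n : ℕ) : Prop := ∀ p : ℕ, p.Prime → p ∣ n → p % 4 = 1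

theorem InP1.of_dvd {m n : ℕ} (hn : InP1 n) (h : m ∣ n) : InP1 m :=
  fun p hp hpm ↦ hn p hp (hpm.trans h)

theorem InP1.mul {m n : ℕ} (hm : InP1 m) (hn : InP1 n) : InP1 (m * n) :=
  fun p hp h ↦ (hp.dvd_mul.1 h).elim (hm p hp) (hn p hp)

theorem inP1_one : InP1 1 := fun _ hp h ↦ absurd (Nat.dvd_one.1 h) hp.ne_one

theorem inP1_prime_pow {p : ℕ} (hp : p.Prime) (h : p % 4 = 1) (k : ℕ) : InP1 (p ^ k) :=
  fun _ hq hqp ↦ (Nat.prime_dvd_prime_iff_eq hq hp).1 (hq.dvd_of_dvd_pow hqp) ▸ h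

open scoped Classical in
/-- The indicator function of a property of positive integers, as an arithmetic function. -/
noncomputable def propIndicator (P : ℕ → Prop) : ArithmeticFunction ℝ :=
  ⟨fun n ↦ if n ≠ 0 ∧ P n then 1 else 0, by simp⟩

open scoped Classical in
theorem propIndicator_apply (P : ℕ → Prop) (n : ℕ) :
    propIndicator P n = if n ≠ 0 ∧ P n then 1 else 0 := rfl

theorem propIndicator_of_prop {P : ℕ → Prop} {n : ℕ} (hn : n ≠ 0) (h : P n) :
    propIndicator P n = 1 := by
  rw [propIndicator_apply, if_pos ⟨hn, h⟩]

theorem propIndicator_nonneg (P : ℕ → Prop) (n : ℕ) : 0 ≤ propIndicator P n := by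
  rw [propIndicator_apply]
  split_ifs <;> norm_num

theorem isMultiplicative_propIndicator {P : ℕ → Prop} (h1 : P 1)
    (hmul : ∀ m n : ℕ, m.Coprime n → (P (m * n) ↔ P m ∧ P n)) :
    (propIndicator P).IsMultiplicative := by
  classical
  refine ⟨propIndicator_of_prop one_ne_zero h1, fun {m n} hmn ↦ ?_⟩
  simp only [propIndicator_apply, mul_ne_zero_iff, hmul m n hmn]
  split_ifs <;> first | tauto | norm_num

theorem convolution_nonneg {f g : ArithmeticFunction ℝ} (hf : ∀ n, 0 ≤ f n)
    (hg : ∀ n, 0 ≤ g n) (n : ℕ) : 0 ≤ (f * g) n := by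
  rw [mul_apply]
  exact sum_nonneg fun x _ ↦ mul_nonneg (hf x.1) (hg x.2)

theorem apply_mul_apply_le_convolution {f g : ArithmeticFunction ℝ} (hf : ∀ n, 0 ≤ f n)
    (hg : ∀ n, 0 ≤ g n) {m n : ℕ} (hm : m ≠ 0) (hn : n ≠ 0) : f m * g n ≤ (f * g) (m * n) :=
  single_le_sum (f := fun x : ℕ × ℕ ↦ f x.1 * g x.2) (fun x _ ↦ mul_nonneg (hf x.1) (hg x.2))
    (Nat.mem_divisorsAntidiagonal.2 ⟨rfl, mul_ne_zero hm hn⟩ : (m, n) ∈ _)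

theorem sum_convolution_div_eq (f g : ArithmeticFunction ℝ) (N : ℕ) :
    ∑ n ∈ Ioc 0 N, (f * g) n / n =
      ∑ d ∈ Ioc 0 N, f d / d * ∑ m ∈ Ioc 0 (N / d), g m / m := by
  have h := sum_Ioc_mul_eq_sum_sum (f.pdiv (ArithmeticFunction.id : ArithmeticFunction ℕ))
    (g.pdiv (ArithmeticFunction.id : ArithmeticFunction ℕ)) N
  simp only [pdiv_apply, natCoe_apply, id_apply] at h
  refine (sum_congr rfl fun n _ ↦ ?_).trans h
  rw [mul_apply, mul_apply, sum_div]
  refine sum_congr rfl fun x hx ↦ ?_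
  simp only [pdiv_apply, natCoe_apply, id_apply]
  rw [← (Nat.mem_divisorsAntidiagonal.1 hx).1, Nat.cast_mul]
  exact mul_div_mul_comm _ _ _ _

theorem sum_convolution_div_le {f g : ArithmeticFunction ℝ} (hf : ∀ n, 0 ≤ f n)
    (hg : ∀ n, 0 ≤ g n) (N : ℕ) :
    ∑ n ∈ Ioc 0 N, (f * g) n / n ≤ (∑ n ∈ Ioc 0 N, f n / n) * ∑ n ∈ Ioc 0 N, g n / n := by
  rw [sum_convolution_div_eq, sum_mul]
  gcongr with d
  · exact div_nonneg (hf d) d.cast_nonneg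
  · exact fun m _ _ ↦ div_nonneg (hg m) m.cast_nonneg
  · exact Nat.div_le_self N d

/-- The sum of the reciprocals of the positive integers `n ≤ N` with the property `P`. -/
noncomputable def reciprocalSum (P : ℕ → Prop) (N : ℕ) : ℝ :=
  ∑ n ∈ Ioc 0 N, propIndicator P n / n

theorem reciprocalSum_eq_sum_filter (P : ℕ → Prop) [DecidablePred P] (N : ℕ) :
    reciprocalSum P N = ∑ n ∈ Ioc 0 N with P n, (n : ℝ)⁻¹ := by
  rw [reciprocalSum, sum_filter]
  refine sum_congr rfl fun n hn ↦ ?_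
  have hn0 : n ≠ 0 := (mem_Ioc.1 hn).1.ne'
  by_cases h : P n <;> simp [propIndicator_apply, h, hn0]

theorem reciprocalSum_nonneg (P : ℕ → Prop) (N : ℕ) : 0 ≤ reciprocalSum P N :=
  sum_nonneg fun n _ ↦ div_nonneg (propIndicator_nonneg P n) n.cast_nonneg

theorem harmonic_eq_sum_Ioc (N : ℕ) : (harmonic N : ℝ) = ∑ n ∈ Ioc 0 N, (n : ℝ)⁻¹ := by
  rw [harmonic_eq_sum_Icc]
  push_cast
  rfl

theorem reciprocalSum_le_harmonic (P : ℕ → Prop) (N : ℕ) : reciprocalSum P N ≤ harmonic N := by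
  classical
  rw [reciprocalSum_eq_sum_filter, harmonic_eq_sum_Ioc]
  exact sum_le_sum_of_subset_of_nonneg (filter_subset _ _) fun n _ _ ↦ by positivity

theorem reciprocalSum_isSquare_le_two (N : ℕ) : reciprocalSum IsSquare N ≤ 2 := by
  rw [reciprocalSum_eq_sum_filter]
  calc ∑ n ∈ Ioc 0 N with IsSquare n, (n : ℝ)⁻¹
      ≤ ∑ n ∈ (Ioo 0 (N + 1)).image (fun s : ℕ ↦ s ^ 2), (n : ℝ)⁻¹ := by
        refine sum_le_sum_of_subset_of_nonneg (fun n hn ↦ ?_) fun n _ _ ↦ by positivity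
        obtain ⟨hnN, s, rfl⟩ := mem_filter.1 hn
        rw [mem_Ioc] at hnN
        refine mem_image.2 ⟨s, mem_Ioo.2 ⟨Nat.pos_of_mul_pos_left hnN.1, ?_⟩, sq s⟩
        exact Nat.lt_succ_of_le ((Nat.le_mul_self s).trans hnN.2)
    _ = ∑ s ∈ Ioo 0 (N + 1), ((s : ℝ) ^ 2)⁻¹ := by
        rw [sum_image (Nat.pow_left_injective two_ne_zero).injOn]
        simp only [Nat.cast_pow]
    _ ≤ 2 := by simpa using sum_Ioo_inv_sq_le (α := ℝ) 0 (N + 1)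

theorem reciprocalSum_dvd_two_le (N : ℕ) : reciprocalSum (· ∣ 2) N ≤ 3 / 2 := by
  classical
  rw [reciprocalSum_eq_sum_filter]
  calc ∑ n ∈ Ioc 0 N with n ∣ 2, (n : ℝ)⁻¹ ≤ ∑ n ∈ ({1, 2} : Finset ℕ), (n : ℝ)⁻¹ := by
        refine sum_le_sum_of_subset_of_nonneg (fun n hn ↦ ?_) fun n _ _ ↦ by positivity
        simpa [Nat.dvd_prime Nat.prime_two] using (mem_filter.1 hn).2
    _ = 3 / 2 := by norm_num

/-- The character `χ₄` as a real arithmetic function. -/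
noncomputable def chiFour : ArithmeticFunction ℝ :=
  ⟨fun n ↦ (ZMod.χ₄ (n : ZMod 4) : ℝ), by simp⟩

theorem chiFour_apply (n : ℕ) : chiFour n = (ZMod.χ₄ (n : ZMod 4) : ℝ) := rfl

theorem isMultiplicative_chiFour : chiFour.IsMultiplicative :=
  ⟨by simp only [chiFour_apply, Nat.cast_one, map_one, Int.cast_one],
    fun _ ↦ by simp only [chiFour_apply, Nat.cast_mul, map_mul, Int.cast_mul]⟩

/-- `n ↦ ∑ d ∣ n, χ₄ d`, a quarter of the number of representations of `n` as a sum of two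
squares. -/
noncomputable def twoSquaresRep : ArithmeticFunction ℝ := chiFour * ζ

theorem twoSquaresRep_prime_pow {p : ℕ} (hp : p.Prime) (k : ℕ) :
    twoSquaresRep (p ^ k) = ∑ i ∈ range (k + 1), (ZMod.χ₄ (p : ZMod 4) : ℝ) ^ i := by
  rw [twoSquaresRep, coe_mul_zeta_apply, Nat.sum_divisors_prime_pow hp]
  simp only [chiFour_apply, Nat.cast_pow, map_pow, Int.cast_pow]

theorem sub_le_sum_chiFour_mul {F : ℕ → ℝ} (hF : ∀ d, 1 ≤ d → F (d + 2) ≤ F d) (M : ℕ) :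
    F 1 - F 3 ≤ ∑ d ∈ range (4 * (M + 1)), chiFour d * F d := by
  have hchi : ∀ d, chiFour d = if d % 2 = 0 then 0 else if d % 4 = 1 then 1 else -1 := by
    intro d
    rw [chiFour_apply, ZMod.χ₄_nat_eq_if_mod_four]
    split_ifs <;> simp
  induction M with
  | zero => simp [sum_range_succ, hchi]
  | succ M ih =>
    -- each block of four consecutive `d` adds `F (4 (M + 1) + 1) - F (4 (M + 1) + 3) ≥ 0`
    have hblock := hF (4 * (M + 1) + 1) (by omega)
    rw [show 4 * (M + 1 + 1) = 4 * (M + 1) + 1 + 1 + 1 + 1 by ring, sum_range_succ, sum_range_succ,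
      sum_range_succ, sum_range_succ, hchi (4 * (M + 1)), hchi (4 * (M + 1) + 1),
      hchi (4 * (M + 1) + 1 + 1), hchi (4 * (M + 1) + 1 + 1 + 1), if_pos (by omega),
      if_neg (by omega), if_pos (by omega), if_pos (by omega), if_neg (by omega),
      if_neg (by omega)]
    linarith

theorem harmonic_mono : Monotone fun N : ℕ ↦ (harmonic N : ℝ) := by
  intro M N h
  simp only [harmonic_eq_sum_Ioc]
  exact sum_le_sum_of_subset_of_nonneg (Ioc_subset_Ioc_right h) fun n _ _ ↦ by positivity

theorem mul_harmonic_le_sum_twoSquaresRep_div (N : ℕ) :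
    2 / 3 * (harmonic N : ℝ) ≤ ∑ n ∈ Ioc 0 N, twoSquaresRep n / n := by
  set F : ℕ → ℝ := fun d ↦ (d : ℝ)⁻¹ * harmonic (N / d) with hF
  have hnonneg (M : ℕ) : (0 : ℝ) ≤ harmonic M := by
    rw [harmonic_eq_sum_Ioc]
    positivity
  have hanti : ∀ d, 1 ≤ d → F (d + 2) ≤ F d := by
    intro d hd
    have hdiv := harmonic_mono (Nat.div_le_div_left (a := N) (by omega : d ≤ d + 2) (by omega))
    have : (0 : ℝ) < d := by exact_mod_cast hd
    simp only [hF]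
    gcongr
    · exact hnonneg _
    · omega
  have hsum : ∑ n ∈ Ioc 0 N, twoSquaresRep n / n =
      ∑ d ∈ range (4 * (N + 1)), chiFour d * F d := by
    rw [twoSquaresRep, sum_convolution_div_eq,
      ← sum_subset (s₁ := Ioc 0 N) (s₂ := range (4 * (N + 1)))]
    · refine sum_congr rfl fun d _ ↦ ?_
      simp only [hF, harmonic_eq_sum_Ioc, div_eq_mul_inv, mul_assoc]
      congr 2
      refine sum_congr rfl fun m hm ↦ ?_
      rw [natCoe_apply, zeta_apply_ne (mem_Ioc.1 hm).1.ne', Nat.cast_one, one_mul]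
    · intro d hd
      rw [mem_Ioc] at hd
      exact mem_range.2 (by omega)
    · intro d _ hd
      rcases Nat.eq_zero_or_pos d with rfl | hd0
      · simp
      · rw [mem_Ioc, not_and, not_le] at hd
        simp [hF, Nat.div_eq_of_lt (hd hd0)]
  rw [hsum]
  refine le_trans ?_ (sub_le_sum_chiFour_mul hanti N)
  have h3 : (harmonic (N / 3) : ℝ) ≤ harmonic N := harmonic_mono (Nat.div_le_self N 3)
  simp only [hF, Nat.cast_one, Nat.div_one, Nat.cast_ofNat]
  linarith

/-- A multiplicative majorant of `twoSquaresRep`: the number of factorizations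
`n = m₁ m₂ s j` with `m₁, m₂ ∈ ⟨P1⟩`, `s` a square and `j ∣ 2`. -/
noncomputable def twoSquaresMajorant : ArithmeticFunction ℝ :=
  (propIndicator InP1 * propIndicator InP1) * (propIndicator IsSquare * propIndicator (· ∣ 2))

theorem isMultiplicative_twoSquaresMajorant : twoSquaresMajorant.IsMultiplicative := by
  have hP1 : (propIndicator InP1).IsMultiplicative :=
    isMultiplicative_propIndicator inP1_one fun m n _ ↦
      ⟨fun h ↦ ⟨h.of_dvd (Dvd.intro _ rfl), h.of_dvd (Dvd.intro_left _ rfl)⟩, fun h ↦ h.1.mul h.2⟩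
  have hsq : (propIndicator IsSquare).IsMultiplicative := by
    refine isMultiplicative_propIndicator IsSquare.one fun m n hmn ↦ ⟨?_, fun h ↦ h.1.mul h.2⟩
    rintro ⟨s, hs⟩
    rw [← sq] at hs
    obtain ⟨u, hu⟩ := exists_eq_pow_of_mul_eq_pow (Nat.isUnit_iff.2 hmn) hs
    obtain ⟨v, hv⟩ := exists_eq_pow_of_mul_eq_pow (Nat.isUnit_iff.2 hmn.symm)
      ((mul_comm n m).trans hs)
    exact ⟨hu ▸ IsSquare.sq u, hv ▸ IsSquare.sq v⟩
  have htwo : (propIndicator (· ∣ 2)).IsMultiplicative :=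
    isMultiplicative_propIndicator (one_dvd 2) fun m n hmn ↦
      ⟨fun h ↦ ⟨(Dvd.intro _ rfl).trans h, (Dvd.intro_left _ rfl).trans h⟩,
        fun h ↦ hmn.mul_dvd_of_dvd_of_dvd h.1 h.2⟩
  exact (hP1.mul hP1).mul (hsq.mul htwo)

theorem convolution_le_twoSquaresMajorant {m s j : ℕ} (hm : m ≠ 0) (hs : IsSquare s) (hs0 : s ≠ 0)
    (hj : j ∣ 2) :
    (propIndicator InP1 * propIndicator InP1) m ≤ twoSquaresMajorant (m * (s * j)) := by
  have hj0 : j ≠ 0 := ne_zero_of_dvd_ne_zero two_ne_zero hj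
  have hnonneg (P Q : ℕ → Prop) := convolution_nonneg (propIndicator_nonneg P)
    (propIndicator_nonneg Q)
  have hsj := apply_mul_apply_le_convolution (propIndicator_nonneg IsSquare)
    (propIndicator_nonneg (· ∣ 2)) hs0 hj0
  rw [propIndicator_of_prop hs0 hs, propIndicator_of_prop hj0 hj, one_mul] at hsj
  exact (le_mul_of_one_le_right (hnonneg _ _ m) hsj).trans
    (apply_mul_apply_le_convolution (hnonneg _ _) (hnonneg _ _) hm (mul_ne_zero hs0 hj0))

theorem convolution_inP1_prime_pow {p : ℕ} (hp : p.Prime) (h : p % 4 = 1) (k : ℕ) :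
    (propIndicator InP1 * propIndicator InP1) (p ^ k) = k + 1 := by
  have hval (i : ℕ) : propIndicator InP1 (p ^ i) = 1 :=
    propIndicator_of_prop (pow_ne_zero _ hp.ne_zero) (inP1_prime_pow hp h i)
  rw [mul_apply,
    Nat.sum_divisorsAntidiagonal (fun a b ↦ propIndicator InP1 a * propIndicator InP1 b),
    Nat.sum_divisors_prime_pow hp]
  have hterm : ∀ i ∈ range (k + 1),
      propIndicator InP1 (p ^ i) * propIndicator InP1 (p ^ k / p ^ i) = 1 := by
    intro i hi
    rw [Nat.pow_div (Nat.lt_succ_iff.1 (mem_range.1 hi)) hp.pos, hval, hval, one_mul]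
  simp [sum_congr rfl hterm]

theorem twoSquaresRep_prime_pow_mem_Icc {p : ℕ} (hp : p.Prime) (k : ℕ) :
    twoSquaresRep (p ^ k) ∈ Set.Icc 0 (twoSquaresMajorant (p ^ k)) := by
  have hone : (propIndicator InP1 * propIndicator InP1) 1 = 1 := by
    simp [propIndicator_of_prop one_ne_zero inP1_one]
  have hp0 : p ≠ 0 := hp.ne_zero
  rw [twoSquaresRep_prime_pow hp]
  rcases hp.eq_two_or_odd with rfl | hodd
  · have hle := convolution_le_twoSquaresMajorant one_ne_zero (IsSquare.sq (2 ^ (k / 2)))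
      (by positivity) (pow_dvd_pow 2 (by omega : k % 2 ≤ 1))
    rw [hone, one_mul, ← pow_mul, ← pow_add, Nat.div_add_mod'] at hle
    rw [show ZMod.χ₄ ((2 : ℕ) : ZMod 4) = 0 by decide, sum_range_succ']
    simpa using hle
  rcases (by omega : p % 4 = 1 ∨ p % 4 = 3) with h1 | h3
  · have hle := convolution_le_twoSquaresMajorant (pow_ne_zero k hp0) IsSquare.one one_ne_zero
      (one_dvd 2)
    rw [convolution_inP1_prime_pow hp h1, mul_one, mul_one] at hle
    rw [ZMod.χ₄_nat_one_mod_four h1]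
    exact ⟨by positivity, by simpa using hle⟩
  · rw [ZMod.χ₄_nat_three_mod_four h3, Int.cast_neg, Int.cast_one, neg_one_geom_sum]
    split_ifs with hk
    · exact ⟨le_rfl, convolution_nonneg
        (convolution_nonneg (propIndicator_nonneg _) (propIndicator_nonneg _))
        (convolution_nonneg (propIndicator_nonneg _) (propIndicator_nonneg _)) _⟩
    · have hsq : IsSquare (p ^ k) := (not_not.1 (mt Nat.even_add_one.2 hk)).isSquare_pow p
      have hle := convolution_le_twoSquaresMajorant one_ne_zero hsq (pow_ne_zero k hp0) (one_dvd 2)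
      rw [hone, one_mul, mul_one] at hle
      exact ⟨zero_le_one, hle⟩

theorem twoSquaresRep_mem_Icc (n : ℕ) : twoSquaresRep n ∈ Set.Icc 0 (twoSquaresMajorant n) := by
  have hrep : twoSquaresRep.IsMultiplicative :=
    isMultiplicative_chiFour.mul isMultiplicative_zeta.natCast
  have hmaj := isMultiplicative_twoSquaresMajorant
  induction n using Nat.recOnPosPrimePosCoprime with
  | zero => simp
  | one => simp [hrep.map_one, hmaj.map_one]
  | prime_pow p k hp _ => exact twoSquaresRep_prime_pow_mem_Icc hp k
  | coprime m n _ _ hmn ihm ihn =>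
    rw [hrep.map_mul_of_coprime hmn, hmaj.map_mul_of_coprime hmn]
    exact ⟨mul_nonneg ihm.1 ihn.1, mul_le_mul ihm.2 ihn.2 ihn.1 (ihm.1.trans ihm.2)⟩

theorem sum_twoSquaresMajorant_div_le (N : ℕ) :
    ∑ n ∈ Ioc 0 N, twoSquaresMajorant n / n ≤ 3 * reciprocalSum InP1 N ^ 2 := by
  have hnonneg (P Q : ℕ → Prop) := convolution_nonneg (propIndicator_nonneg P)
    (propIndicator_nonneg Q)
  have hP1 := sum_convolution_div_le (propIndicator_nonneg InP1) (propIndicator_nonneg InP1) N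
  have hsq := sum_convolution_div_le (propIndicator_nonneg IsSquare)
    (propIndicator_nonneg (· ∣ 2)) N
  calc ∑ n ∈ Ioc 0 N, twoSquaresMajorant n / n
      ≤ (reciprocalSum InP1 N * reciprocalSum InP1 N) *
          (reciprocalSum IsSquare N * reciprocalSum (· ∣ 2) N) :=
        (sum_convolution_div_le (hnonneg _ _) (hnonneg _ _) N).trans
          (mul_le_mul hP1 hsq (sum_nonneg fun n _ ↦ div_nonneg (hnonneg _ _ n) n.cast_nonneg)
            (mul_self_nonneg _))
    _ ≤ (reciprocalSum InP1 N * reciprocalSum InP1 N) * (2 * (3 / 2)) := by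
        gcongr
        · exact mul_self_nonneg _
        · exact reciprocalSum_nonneg _ N
        · exact reciprocalSum_isSquare_le_two N
        · exact reciprocalSum_dvd_two_le N
    _ = 3 * reciprocalSum InP1 N ^ 2 := by ring

theorem sqrt_log_div_three_le_reciprocalSum_inP1 (N : ℕ) :
    √(Real.log (N + 1)) / 3 ≤ reciprocalSum InP1 N := by
  have hsum : 2 / 3 * Real.log (N + 1) ≤ 3 * reciprocalSum InP1 N ^ 2 := by
    calc 2 / 3 * Real.log (N + 1) ≤ 2 / 3 * (harmonic N : ℝ) := by
          gcongr
          exact_mod_cast log_add_one_le_harmonic N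
      _ ≤ ∑ n ∈ Ioc 0 N, twoSquaresRep n / n := mul_harmonic_le_sum_twoSquaresRep_div N
      _ ≤ ∑ n ∈ Ioc 0 N, twoSquaresMajorant n / n := by
          gcongr with n
          exact (twoSquaresRep_mem_Icc n).2
      _ ≤ _ := sum_twoSquaresMajorant_div_le N
  have hlog : 0 ≤ Real.log (N + 1) := Real.log_nonneg (by linarith [N.cast_nonneg (α := ℝ)])
  refine le_of_sq_le_sq ?_ (reciprocalSum_nonneg _ N)
  rw [div_pow, Real.sq_sqrt hlog]
  linarith

theorem one_sub_inv_mul_reciprocalSum_le {P : ℕ → Prop} (hP : ∀ m n, m ∣ n → P n → P m) {d : ℕ}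
    (hd : d ≠ 0) (N : ℕ) :
    (1 - (d : ℝ)⁻¹) * reciprocalSum P N ≤ reciprocalSum (fun n ↦ P n ∧ ¬ d ∣ n) N := by
  classical
  have hmultiples : ∑ n ∈ Ioc 0 N with P n ∧ d ∣ n, (n : ℝ)⁻¹ ≤
      ∑ n ∈ ({n ∈ Ioc 0 N | P n}).image (d * ·), (n : ℝ)⁻¹ := by
    refine sum_le_sum_of_subset_of_nonneg (fun n hn ↦ ?_) fun n _ _ ↦ by positivity
    obtain ⟨hnN, hPn, m, rfl⟩ := mem_filter.1 hn
    rw [mem_Ioc] at hnN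
    refine mem_image.2 ⟨m, mem_filter.2 ⟨mem_Ioc.2 ⟨Nat.pos_of_mul_pos_left hnN.1, ?_⟩, ?_⟩, rfl⟩
    · exact (Nat.le_mul_of_pos_left m (Nat.pos_of_ne_zero hd)).trans hnN.2
    · exact hP m _ (Dvd.intro_left d rfl) hPn
  rw [sum_image fun m _ n _ h ↦ Nat.eq_of_mul_eq_mul_left (Nat.pos_of_ne_zero hd) h] at hmultiples
  simp only [Nat.cast_mul, mul_inv, ← mul_sum] at hmultiples
  have hsplit := sum_filter_add_sum_filter_not {n ∈ Ioc 0 N | P n} (d ∣ ·) (fun n ↦ (n : ℝ)⁻¹)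
  simp only [filter_filter] at hsplit
  rw [reciprocalSum_eq_sum_filter, reciprocalSum_eq_sum_filter, one_sub_mul, sub_le_iff_le_add']
  exact hsplit.symm.trans_le (add_le_add_left hmultiples _)

theorem prod_one_sub_inv_mul_reciprocalSum_le {P : ℕ → Prop} (hP : ∀ m n, m ∣ n → P n → P m)
    {F : Finset ℕ} (hF : 0 ∉ F) (N : ℕ) :
    (∏ d ∈ F, (1 - (d : ℝ)⁻¹)) * reciprocalSum P N ≤
      reciprocalSum (fun n ↦ P n ∧ ∀ d ∈ F, ¬ d ∣ n) N := by
  induction F using Finset.induction_on with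
  | empty => simp
  | insert d F hd ih =>
    have hd0 : d ≠ 0 := fun h ↦ hF (by simp [h])
    have hnonneg : 0 ≤ 1 - (d : ℝ)⁻¹ :=
      sub_nonneg.2 (inv_le_one_of_one_le₀ (by exact_mod_cast Nat.pos_of_ne_zero hd0))
    rw [prod_insert hd, mul_assoc]
    refine (mul_le_mul_of_nonneg_left (ih fun h ↦ hF (mem_insert_of_mem h)) hnonneg).trans ?_
    refine (one_sub_inv_mul_reciprocalSum_le (fun m n hmn h ↦
      ⟨hP m n hmn h.1, fun e he hem ↦ h.2 e he (hem.trans hmn)⟩) hd0 N).trans_eq ?_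
    congr 1
    ext n
    simp only [forall_mem_insert]
    tauto

theorem totient_mul_eq_mul_prod {A W : ℕ} (hA : A ≠ 0) (hW : W ≠ 0) : ((A * W).totient : ℝ) =
    A * W.totient * ∏ p ∈ A.primeFactors \ W.primeFactors, (1 - (p : ℝ)⁻¹) := by
  have htotient (n : ℕ) : (n.totient : ℝ) = n * ∏ p ∈ n.primeFactors, (1 - (p : ℝ)⁻¹) := by
    have h := congrArg (Rat.cast : ℚ → ℝ) (Nat.totient_eq_mul_prod_factors n)
    push_cast at h
    exact h
  rw [htotient, htotient W, Nat.primeFactors_mul hA hW, union_comm, ← union_sdiff_self_eq_union,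
    prod_union disjoint_sdiff]
  push_cast
  ring

theorem totient_mul_reciprocalSum_inP1_le {A W : ℕ} (hA : A ≠ 0) (hW : W ≠ 0) (hW3 : InP3 W)
    (N : ℕ) :
    (A * W).totient * reciprocalSum InP1 N ≤
      A * W.totient * reciprocalSum (fun m ↦ InP1 m ∧ m.Coprime A) N := by
  classical
  rw [totient_mul_eq_mul_prod hA hW, mul_assoc]
  gcongr
  refine (prod_one_sub_inv_mul_reciprocalSum_le (fun _ _ h hn ↦ hn.of_dvd h) (by simp) N).trans ?_
  simp only [reciprocalSum_eq_sum_filter]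
  refine sum_le_sum_of_subset_of_nonneg (fun m hm ↦ ?_) fun _ _ _ ↦ by positivity
  rw [mem_filter] at hm ⊢
  obtain ⟨hmN, hm1, hm⟩ := hm
  refine ⟨hmN, hm1, ?_⟩
  refine Nat.coprime_of_dvd fun p hp hpm hpA ↦ hm p ?_ hpm
  simp only [mem_sdiff, Nat.mem_primeFactors, hp, hpA, hA, hW, ne_eq, not_false_eq_true, and_true,
    true_and]
  intro hpW
  exact absurd ((hm1 p hp hpm).symm.trans (hW3 p hp hpW)) (by norm_num)

end ReciprocalSums

section PrimesInProgressions

open Finset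

theorem piR_eq_card (x : ℝ) : piR x = #(primesIoc 0 x) := by
  rw [piR, ← Set.ncard_coe_finset]
  congr 1
  ext p
  simp only [primesIoc, Nat.floor_zero, coe_filter, mem_Ioc, Set.mem_ofPred_eq]
  exact ⟨fun ⟨hp, h⟩ ↦ ⟨⟨hp.pos, (Nat.le_floor_iff' hp.ne_zero).2 h⟩, hp⟩,
    fun ⟨h, hp⟩ ↦ ⟨hp, (Nat.le_floor_iff' hp.ne_zero).1 h.2⟩⟩

theorem piAP_eq_card (x : ℝ) (q a : ℕ) : piAP x q a = #{p ∈ primesIoc 0 x | p % q = a % q} := by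
  rw [piAP, ← Set.ncard_coe_finset]
  congr 1
  ext p
  simp only [primesIoc, Nat.floor_zero, coe_filter, mem_filter, mem_Ioc, Set.mem_ofPred_eq]
  exact ⟨fun ⟨hp, h, ha⟩ ↦ ⟨⟨⟨hp.pos, (Nat.le_floor_iff' hp.ne_zero).2 h⟩, hp⟩, ha⟩,
    fun ⟨⟨h, hp⟩, ha⟩ ↦ ⟨hp, (Nat.le_floor_iff' hp.ne_zero).1 h.2, ha⟩⟩

theorem piR_le {x x' : ℝ} (hx : 0 ≤ x) (h : x' ≤ x) : (piR x' : ℝ) ≤ x := by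
  rw [piR_eq_card]
  refine (Nat.cast_le (α := ℝ).2 (card_filter_le _ _)).trans ?_
  simpa using (Nat.cast_le (α := ℝ).2 (Nat.floor_le_floor h)).trans (Nat.floor_le hx)

theorem piAP_le {x x' : ℝ} {q : ℕ} (hq : 1 ≤ q) (hqx : q ≤ x) (h : x' ≤ x) (a : ℕ) :
    (piAP x' q a : ℝ) ≤ 2 * x / q := by
  have hq₀ : (0 : ℝ) < q := by exact_mod_cast hq
  have hx₀ : 0 ≤ x := hq₀.le.trans hqx
  have hsub : {p ∈ primesIoc 0 x' | p % q = a % q} ⊆ {p ∈ Ioc 0 ⌊x⌋₊ | p ≡ a [MOD q]} := by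
    intro p
    simp only [primesIoc, mem_filter, mem_Ioc, Nat.floor_zero]
    exact fun ⟨⟨⟨h0, hp⟩, _⟩, ha⟩ ↦ ⟨⟨h0, hp.trans (Nat.floor_le_floor h)⟩, ha⟩
  have hcard : #{p ∈ Ioc 0 ⌊x⌋₊ | p ≡ a [MOD q]} ≤ ⌊x⌋₊ / q + 1 := by
    rw [← card_range (⌊x⌋₊ / q + 1)]
    refine card_le_card_of_injOn (· / q) (fun p hp ↦ ?_) fun p hp p' hp' hpp' ↦ ?_
    · simp only [coe_filter, Set.mem_ofPred_eq, mem_Ioc] at hp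
      exact mem_coe.2 (mem_range_succ_iff.2 (Nat.div_le_div_right hp.1.2))
    · simp only [coe_filter, Set.mem_ofPred_eq] at hp hp'
      rw [← Nat.div_add_mod p q, ← Nat.div_add_mod p' q, hp.2.trans hp'.2.symm,
        show p / q = p' / q from hpp']
  calc (piAP x' q a : ℝ) ≤ (⌊x⌋₊ / q + 1 : ℕ) := by
        rw [piAP_eq_card]
        exact_mod_cast (card_le_card hsub).trans hcard
    _ ≤ x / q + 1 := by
        rw [Nat.cast_succ]
        gcongr
        exact Nat.cast_div_le.trans (by gcongr; exact Nat.floor_le hx₀)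
    _ ≤ x / q + x / q := by
        gcongr
        rwa [one_le_div hq₀]
    _ = 2 * x / q := by ring

theorem abs_piAP_sub_le {x x' : ℝ} {q : ℕ} (hq : 1 ≤ q) (hqx : q ≤ x) (h : x' ≤ x) (a : ℕ) :
    |(piAP x' q a : ℝ) - piR x' / q.totient| ≤ 2 * x / q.totient := by
  have : (0 : ℝ) < q.totient := by exact_mod_cast Nat.totient_pos.2 hq
  have hx₀ : 0 ≤ x := q.cast_nonneg.trans hqx
  refine abs_sub_le_of_nonneg_of_le (by positivity) ?_ (by positivity) ?_
  · refine (piAP_le hq hqx h a).trans ?_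
    gcongr
    exact_mod_cast q.totient_le
  · gcongr
    linarith [piR_le hx₀ h]

theorem Eerr_nonneg (x : ℝ) (q : ℕ) : 0 ≤ Eerr x q := by
  refine Real.sSup_nonneg ?_
  rintro _ ⟨a, x', -, -, rfl⟩
  exact abs_nonneg _

theorem Eerr_le {x : ℝ} {q : ℕ} (hq : 1 ≤ q) (hqx : q ≤ x) : Eerr x q ≤ 2 * x / q.totient := by
  refine csSup_le ⟨_, 1, x, Nat.coprime_one_left q, le_rfl, rfl⟩ ?_
  rintro _ ⟨a, x', -, hx', rfl⟩
  exact abs_piAP_sub_le hq hqx hx' a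

theorem abs_piAP_sub_le_Eerr {x x' : ℝ} {q a : ℕ} (hq : 1 ≤ q) (hqx : q ≤ x) (h : x' ≤ x)
    (ha : a.Coprime q) : |(piAP x' q a : ℝ) - piR x' / q.totient| ≤ Eerr x q := by
  refine le_csSup ⟨2 * x / q.totient, ?_⟩ ⟨a, x', ha, h, rfl⟩
  rintro _ ⟨a, x', -, hx', rfl⟩
  exact abs_piAP_sub_le hq hqx hx' a

theorem card_filter_primesIoc_add (P : ℕ → Prop) [DecidablePred P] {Y₁ Y₂ : ℝ} (h : Y₁ ≤ Y₂) :
    #{p ∈ primesIoc 0 Y₁ | P p} + #{p ∈ primesIoc Y₁ Y₂ | P p} = #{p ∈ primesIoc 0 Y₂ | P p} := by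
  have hunion : primesIoc 0 Y₂ = primesIoc 0 Y₁ ∪ primesIoc Y₁ Y₂ := by
    rw [primesIoc, primesIoc, primesIoc, ← filter_union,
      Ioc_union_Ioc_eq_Ioc (by simp) (Nat.floor_le_floor h)]
  have hdisj : Disjoint (primesIoc 0 Y₁) (primesIoc Y₁ Y₂) :=
    disjoint_filter_filter (Ioc_disjoint_Ioc_of_le le_rfl)
  rw [hunion, filter_union, card_union_of_disjoint (disjoint_filter_filter hdisj)]

theorem abs_card_filter_primesIoc_sub_le {x Y₁ Y₂ : ℝ} {q c : ℕ} (h₁₂ : Y₁ ≤ Y₂) (h₂ : Y₂ ≤ x)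
    (hq : 1 ≤ q) (hqx : q ≤ x) (hc : c.Coprime q) :
    |(#{p ∈ primesIoc Y₁ Y₂ | p % q = c % q} : ℝ) - #(primesIoc Y₁ Y₂) / q.totient| ≤
      2 * Eerr x q := by
  have hAP : (piAP Y₂ q c : ℝ) - piAP Y₁ q c = #{p ∈ primesIoc Y₁ Y₂ | p % q = c % q} := by
    rw [piAP_eq_card, piAP_eq_card, ← card_filter_primesIoc_add _ h₁₂, Nat.cast_add,
      add_sub_cancel_left]
  have hR : (piR Y₂ : ℝ) - piR Y₁ = #(primesIoc Y₁ Y₂) := by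
    have h := card_filter_primesIoc_add (fun _ ↦ True) h₁₂
    rw [filter_true, filter_true, filter_true] at h
    rw [piR_eq_card, piR_eq_card, ← h, Nat.cast_add, add_sub_cancel_left]
  calc |(#{p ∈ primesIoc Y₁ Y₂ | p % q = c % q} : ℝ) - #(primesIoc Y₁ Y₂) / q.totient|
      = |((piAP Y₂ q c : ℝ) - piR Y₂ / q.totient) - (piAP Y₁ q c - piR Y₁ / q.totient)| := by
        rw [← hAP, ← hR]
        congr 1
        ring
    _ ≤ Eerr x q + Eerr x q := (abs_sub _ _).trans
        (add_le_add (abs_piAP_sub_le_Eerr hq hqx h₂ hc)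
          (abs_piAP_sub_le_Eerr hq hqx (h₁₂.trans h₂) hc))
    _ = 2 * Eerr x q := by ring

end PrimesInProgressions

section LocalCounts

open Finset

/-- Functions `ℤ → ℤ` compatible with every congruence, such as integer polynomials. The local
counts of the sieve use nothing else about the product of the linear functions `L_i`. -/
def PreservesModEq (F : ℤ → ℤ) : Prop := ∀ ⦃n x y : ℤ⦄, x ≡ y [ZMOD n] → F x ≡ F y [ZMOD n]

theorem preservesModEq_linear (A B : ℤ) : PreservesModEq fun t ↦ A * t + B :=
  fun _ _ _ h ↦ (h.mul_left A).add_right B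

theorem PreservesModEq.prod {ι : Type*} {s : Finset ι} {F : ι → ℤ → ℤ}
    (h : ∀ i ∈ s, PreservesModEq (F i)) : PreservesModEq fun t ↦ ∏ i ∈ s, F i t :=
  fun _ _ _ hxy ↦ Int.ModEq.prod fun i hi ↦ h i hi hxy

theorem isCoprime_iff_of_modEq {n x y : ℤ} (h : x ≡ y [ZMOD n]) :
    IsCoprime x n ↔ IsCoprime y n := by
  obtain ⟨t, rfl⟩ := Int.modEq_iff_add_fac.1 h
  exact IsCoprime.add_mul_left_left_iff.symm

/-- The residues `t < r` with `F t ≡ 0 (mod r)` and `G t` invertible modulo `r`. With `F = ∏ L_i`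
and `G` dividing one of the `L_i`, these are the classes of those `n` with `r ∣ F n` for which `G n`
is coprime to `r`. -/
def unitRoots (F G : ℤ → ℤ) (r : ℕ) : Finset ℕ :=
  {t ∈ range r | (r : ℤ) ∣ F (t : ℕ) ∧ Int.gcd (G t) r = 1}

theorem mem_unitRoots {F G : ℤ → ℤ} {r t : ℕ} :
    t ∈ unitRoots F G r ↔ t < r ∧ (r : ℤ) ∣ F t ∧ IsCoprime (G t) r := by
  rw [unitRoots, mem_filter, mem_range, Int.isCoprime_iff_gcd_eq_one]

theorem card_filter_range_mul {P : ℕ → ℕ → Prop} [∀ r, DecidablePred (P r)]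
    (hP : ∀ {r s t : ℕ}, s ≡ t [MOD r] → (P r s ↔ P r t)) {u v : ℕ} (huv : u.Coprime v)
    (hmul : ∀ t, P (u * v) t ↔ P u t ∧ P v t) :
    #{t ∈ range (u * v) | P (u * v) t} = #{t ∈ range u | P u t} * #{t ∈ range v | P v t} := by
  rcases u.eq_zero_or_pos with rfl | hu
  · simp
  rcases v.eq_zero_or_pos with rfl | hv
  · simp
  rw [← card_product]
  refine card_bij' (fun t _ ↦ (t % u, t % v))
    (fun x _ ↦ (Nat.chineseRemainder huv x.1 x.2 : ℕ)) ?_ ?_ ?_ ?_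
  · intro t ht
    rw [mem_filter, hmul] at ht
    simp only [mem_product, mem_filter, mem_range]
    exact ⟨⟨Nat.mod_lt _ hu, (hP (Nat.mod_modEq t u)).2 ht.2.1⟩,
      Nat.mod_lt _ hv, (hP (Nat.mod_modEq t v)).2 ht.2.2⟩
  · rintro ⟨x, y⟩ hxy
    simp only [mem_product, mem_filter] at hxy
    have hcrt := (Nat.chineseRemainder huv x y).2
    rw [mem_filter, mem_range, hmul]
    exact ⟨Nat.chineseRemainder_lt_mul huv x y hu.ne' hv.ne', (hP hcrt.1).2 hxy.1.2,
      (hP hcrt.2).2 hxy.2.2⟩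
  · intro t ht
    have hcrt := (Nat.chineseRemainder huv (t % u) (t % v)).2
    exact ((Nat.modEq_and_modEq_iff_modEq_mul huv).1 ⟨hcrt.1.trans (Nat.mod_modEq _ _),
      hcrt.2.trans (Nat.mod_modEq _ _)⟩).eq_of_lt_of_lt
      (Nat.chineseRemainder_lt_mul huv _ _ hu.ne' hv.ne') (mem_range.1 (mem_filter.1 ht).1)
  · rintro ⟨x, y⟩ hxy
    simp only [mem_product, mem_filter, mem_range] at hxy
    have hcrt := (Nat.chineseRemainder huv x y).2
    exact Prod.ext (Eq.trans hcrt.1 (Nat.mod_eq_of_lt hxy.1.1))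
      (Eq.trans hcrt.2 (Nat.mod_eq_of_lt hxy.2.1))

theorem card_unitRoots_mul {F G : ℤ → ℤ} (hF : PreservesModEq F) (hG : PreservesModEq G) {u v : ℕ}
    (huv : u.Coprime v) :
    #(unitRoots F G (u * v)) = #(unitRoots F G u) * #(unitRoots F G v) := by
  refine card_filter_range_mul (P := fun r t ↦ (r : ℤ) ∣ F (t : ℕ) ∧ Int.gcd (G t) r = 1)
    (fun h ↦ ?_) huv fun t ↦ ?_
  · have h' := Int.natCast_modEq_iff.2 h
    rw [← Int.isCoprime_iff_gcd_eq_one, ← Int.isCoprime_iff_gcd_eq_one, (hF h').dvd_iff,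
      isCoprime_iff_of_modEq (hG h')]
  · simp only [← Int.isCoprime_iff_gcd_eq_one, Nat.cast_mul, IsCoprime.mul_right_iff]
    have hdvd : (u : ℤ) * v ∣ F t ↔ (u : ℤ) ∣ F t ∧ (v : ℤ) ∣ F t :=
      ⟨fun h ↦ ⟨(dvd_mul_right _ _).trans h, (dvd_mul_left _ _).trans h⟩,
        fun h ↦ (Nat.isCoprime_iff_coprime.2 huv).mul_dvd h.1 h.2⟩
    tauto

theorem card_unitRoots_of_squarefree {F G : ℤ → ℤ} (hF : PreservesModEq F)
    (hG : PreservesModEq G) {r : ℕ} (hr : Squarefree r) :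
    #(unitRoots F G r) = ∏ p ∈ r.primeFactors, #(unitRoots F G p) := by
  rw [Nat.multiplicative_factorization (fun r ↦ #(unitRoots F G r))
    (fun _ _ ↦ card_unitRoots_mul hF hG) (by simp [unitRoots]) hr.ne_zero]
  refine prod_congr (Nat.support_factorization r) fun p hp ↦ ?_
  have hp1 : r.factorization p = 1 := le_antisymm (hr.natFactorization_le_one p)
    ((Nat.prime_of_mem_primeFactors hp).factorization_pos_of_dvd hr.ne_zero
      (Nat.dvd_of_mem_primeFactors hp))
  simp only [hp1, pow_one]

theorem exists_lt_forall_dvd_linear_iff {A : ℤ} {n : ℕ} (hn : 0 < n) (hA : IsCoprime A n) (B : ℤ) :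
    ∃ t₀ < n, ∀ t < n, (n : ℤ) ∣ A * (t : ℕ) + B ↔ t = t₀ := by
  obtain ⟨u, v, huv⟩ := hA
  obtain ⟨t₀, ht₀, h⟩ := Int.existsUnique_equiv_nat (-u * B) (Nat.cast_pos.2 hn : (0 : ℤ) < n)
  have hroot : (n : ℤ) ∣ A * t₀ + B := by
    refine (((h.mul_left A).add_right B).dvd_iff).2 ⟨v * B, ?_⟩
    linear_combination (-B) * huv
  refine ⟨t₀, Nat.cast_lt.1 ht₀, fun t ht ↦ ⟨fun hdvd ↦ ?_, fun h ↦ h ▸ hroot⟩⟩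
  refine Nat.ModEq.eq_of_lt_of_lt (Int.natCast_modEq_iff.1 (Int.modEq_iff_dvd.2 ?_)) ht
    (Nat.cast_lt.1 ht₀)
  refine IsCoprime.dvd_of_dvd_mul_left (isCoprime_comm.1 ⟨u, v, huv⟩) ?_
  convert dvd_sub hroot hdvd using 1
  ring

theorem isCoprime_natCast_iff_not_dvd {p : ℕ} (hp : p.Prime) (x : ℤ) :
    IsCoprime x p ↔ ¬ (p : ℤ) ∣ x := by
  rw [isCoprime_comm, (Nat.prime_iff_prime_int.1 hp).coprime_iff_not_dvd]

theorem card_unitRoots_prime_add_one {F : ℤ → ℤ} {A B : ℤ} {p : ℕ} (hp : p.Prime)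
    (hA : ¬ (p : ℤ) ∣ A) (hF : ∀ t : ℤ, A * t + B ∣ F t) :
    #(unitRoots F (fun t ↦ A * t + B) p) + 1 = #{t ∈ range p | (p : ℤ) ∣ F (t : ℕ)} := by
  obtain ⟨t₀, ht₀, h⟩ :=
    exists_lt_forall_dvd_linear_iff hp.pos ((isCoprime_natCast_iff_not_dvd hp A).2 hA) B
  have hroot := (h t₀ ht₀).2 rfl
  have hmem : t₀ ∈ ({t ∈ range p | (p : ℤ) ∣ F (t : ℕ)} : Finset ℕ) :=
    mem_filter.2 ⟨mem_range.2 ht₀, hroot.trans (hF t₀)⟩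
  rw [← card_erase_add_one hmem]
  congr 2
  ext t
  rw [mem_unitRoots, isCoprime_natCast_iff_not_dvd hp, mem_erase, mem_filter, mem_range]
  refine ⟨fun ⟨ht, hd, hn⟩ ↦ ⟨fun he ↦ hn ((h t ht).2 he), ht, hd⟩,
    fun ⟨hne, ht, hd⟩ ↦ ⟨ht, hd, fun hn ↦ hne ((h t ht).1 hn)⟩⟩

theorem card_roots_prod_linear_le {ι : Type*} [Fintype ι] (a b : ι → ℤ) {p : ℕ} (hp : p.Prime)
    (ha : ∀ i, ¬ (p : ℤ) ∣ a i) :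
    #{t ∈ range p | (p : ℤ) ∣ ∏ i, (a i * (t : ℕ) + b i)} ≤ Fintype.card ι := by
  choose f _ hf using fun i ↦
    exists_lt_forall_dvd_linear_iff hp.pos ((isCoprime_natCast_iff_not_dvd hp (a i)).2 (ha i)) (b i)
  refine (card_le_card fun t ht ↦ ?_).trans (card_image_le (s := univ) (f := f))
  rw [mem_filter, mem_range] at ht
  obtain ⟨i, -, hi⟩ := ((Nat.prime_iff_prime_int.1 hp).dvd_finsetProd_iff _).1 ht.2
  exact mem_image.2 ⟨i, mem_univ i, ((hf i t ht.1).1 hi).symm⟩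

end LocalCounts

section PrimeMultiples

open Finset

theorem exists_eq_linear_and_modEq_iff (A B D n₀ y : ℤ) :
    (∃ n : ℤ, y = A * n + B ∧ n ≡ n₀ [ZMOD D]) ↔ y ≡ A * n₀ + B [ZMOD A * D] := by
  constructor
  · rintro ⟨n, rfl, h⟩
    exact h.mul_left'.add_right B
  · intro h
    obtain ⟨t, ht⟩ := Int.modEq_iff_add_fac.1 h.symm
    exact ⟨n₀ + D * t, by rw [ht]; ring, (Int.modEq_add_fac_self : n₀ + D * t ≡ n₀ [ZMOD D])⟩

theorem exists_residue_of_mul_modEq {m Q : ℕ} {s : ℤ} (hQ : 0 < Q) (h4 : Nat.Coprime 4 Q)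
    (hm : m.Coprime Q) (hs : IsCoprime s Q) :
    ∃ c : ℕ, c.Coprime (4 * Q) ∧
      ∀ p : ℕ, p % (4 * Q) = c % (4 * Q) ↔ p % 4 = 1 ∧ (m : ℤ) * p ≡ s [ZMOD Q] := by
  obtain ⟨u, v, huv⟩ := Nat.isCoprime_iff_coprime.2 hm
  obtain ⟨j, -, hj⟩ := Int.existsUnique_equiv_nat (u * s) (Nat.cast_pos.2 hQ : (0 : ℤ) < Q)
  obtain ⟨c, hc4, hcj⟩ := Nat.chineseRemainder h4 1 j
  have hmc : (m : ℤ) * c ≡ s [ZMOD Q] := by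
    refine (((Int.natCast_modEq_iff.2 hcj).trans hj).mul_left m).trans (Int.modEq_iff_dvd.2 ?_)
    exact ⟨v * s, by linear_combination (-s) * huv⟩
  refine ⟨c, ?_, fun p ↦ ?_⟩
  · refine Nat.Coprime.mul_right ?_ (Nat.isCoprime_iff_coprime.1
      ((isCoprime_iff_of_modEq hmc).2 hs).of_mul_left_right)
    rw [Nat.Coprime, Nat.gcd_comm, Nat.gcd_rec, hc4]
    rfl
  · have hp : p % (4 * Q) = c % (4 * Q) ↔ p ≡ c [MOD 4] ∧ p ≡ c [MOD Q] :=
      (Nat.modEq_and_modEq_iff_modEq_mul h4).symm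
    rw [hp, Nat.ModEq, hc4, ← Int.natCast_modEq_iff]
    refine and_congr_right' ⟨fun h ↦ (h.mul_left m).trans hmc, fun h ↦ ?_⟩
    have hdvd := Int.modEq_iff_dvd.1 (h.trans hmc.symm)
    rw [← mul_sub] at hdvd
    exact Int.modEq_iff_dvd.2
      ((Nat.isCoprime_iff_coprime.2 hm).symm.dvd_of_dvd_mul_left hdvd)

open scoped Classical in
/-- The integers `n ∈ (X, 2X]` in the class of `n₀` modulo `D` for which `A n + B` is `m` times a
prime `≡ 1 (mod 4)`: for `m ∈ ⟨P1⟩` such `n` make `A n + B` a sum of two squares. -/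
noncomputable def primeMultipleArgs (X : ℝ) (A D : ℕ) (B n₀ : ℤ) (m : ℕ) : Finset ℤ :=
  {n ∈ Icc (⌊X⌋ + 1) ⌊2 * X⌋ | n ≡ n₀ [ZMOD D] ∧
    ∃ p : ℕ, p.Prime ∧ p % 4 = 1 ∧ (m : ℤ) * p = A * n + B}

theorem mem_primeMultipleArgs {X : ℝ} {A D m : ℕ} {B n₀ n : ℤ} :
    n ∈ primeMultipleArgs X A D B n₀ m ↔ (X < n ∧ n ≤ 2 * X) ∧ n ≡ n₀ [ZMOD D] ∧
      ∃ p : ℕ, p.Prime ∧ p % 4 = 1 ∧ (m : ℤ) * p = A * n + B := by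
  simp only [primeMultipleArgs, mem_filter, mem_Icc, Int.add_one_le_iff, Int.floor_lt, Int.le_floor]

/-- The primes `p` for which `m p` lies between `A X + B` and `A (2 X) + B`. -/
noncomputable def cofactorPrimes (X : ℝ) (A : ℕ) (B : ℤ) (m : ℕ) : Finset ℕ :=
  primesIoc ((A * X + B) / m) ((A * (2 * X) + B) / m)

theorem mem_cofactorPrimes {X : ℝ} {A m p : ℕ} {B n : ℤ} (hX : 0 ≤ X) (hA : 0 < A) (hB : 0 ≤ B)
    (hm : 0 < m) (h : (m : ℤ) * p = A * n + B) :
    p ∈ cofactorPrimes X A B m ↔ (X < n ∧ n ≤ 2 * X) ∧ p.Prime := by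
  have hm' : (0 : ℝ) < m := Nat.cast_pos.2 hm
  have hA' : (0 : ℝ) < A := Nat.cast_pos.2 hA
  have : (0 : ℝ) ≤ B := Int.cast_nonneg hB
  have h' : (p : ℝ) * m = A * n + B := by
    rw [mul_comm]
    exact_mod_cast h
  rw [cofactorPrimes, primesIoc, mem_filter, mem_Ioc, Nat.floor_lt (by positivity),
    Nat.le_floor_iff (by positivity), div_lt_iff₀ hm', le_div_iff₀ hm', h', add_lt_add_iff_right,
    add_le_add_iff_right, mul_lt_mul_iff_right₀ hA', mul_le_mul_iff_right₀ hA']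

theorem card_primeMultipleArgs {X : ℝ} {A D m c q : ℕ} {B n₀ : ℤ} (hX : 0 ≤ X) (hA : 0 < A)
    (hB : 0 ≤ B) (hm : 0 < m)
    (hc : ∀ p : ℕ, p % q = c % q ↔ p % 4 = 1 ∧ (m : ℤ) * p ≡ A * n₀ + B [ZMOD A * D]) :
    #(primeMultipleArgs X A D B n₀ m) = #{p ∈ cofactorPrimes X A B m | p % q = c % q} := by
  have hval {n : ℤ} {p : ℕ} (h : (m : ℤ) * p = A * n + B) :
      ((A * n + B) / (m : ℤ)).toNat = p := by
    rw [← h, Int.mul_ediv_cancel_left _ (Nat.cast_ne_zero.2 hm.ne'), Int.toNat_natCast]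
  refine card_bij (fun n _ ↦ ((A * n + B) / (m : ℤ)).toNat) ?_ ?_ ?_
  · intro n hn
    obtain ⟨hX', hmod, p, hp, hp4, h⟩ := mem_primeMultipleArgs.1 hn
    rw [hval h, mem_filter, mem_cofactorPrimes hX hA hB hm h, hc]
    exact ⟨⟨hX', hp⟩, hp4, (exists_eq_linear_and_modEq_iff _ _ _ _ _).1 ⟨n, h, hmod⟩⟩
  · intro n hn n' hn' he
    obtain ⟨-, -, p, -, -, h⟩ := mem_primeMultipleArgs.1 hn
    obtain ⟨-, -, p', -, -, h'⟩ := mem_primeMultipleArgs.1 hn'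
    rw [hval h, hval h'] at he
    refine mul_left_cancel₀ (Nat.cast_ne_zero.2 hA.ne' : (A : ℤ) ≠ 0) ?_
    linear_combination h' - h + (m : ℤ) * congrArg (Nat.cast : ℕ → ℤ) he
  · intro p hp
    rw [mem_filter, hc] at hp
    obtain ⟨n, h, hmod⟩ := (exists_eq_linear_and_modEq_iff _ _ _ _ _).2 hp.2.2
    rw [mem_cofactorPrimes hX hA hB hm h] at hp
    exact ⟨n, mem_primeMultipleArgs.2 ⟨hp.1.1, hmod, p, hp.1.2, hp.2.1, h⟩, hval h⟩

theorem abs_card_primeMultipleArgs_sub_le {X x : ℝ} {A D m : ℕ} {B n₀ : ℤ} (hX : 0 ≤ X)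
    (hA : 0 < A) (hB : 0 ≤ B) (hm : 0 < m) (hD : 0 < D) (h4 : Nat.Coprime 4 (A * D))
    (hmAD : m.Coprime (A * D)) (hBA : IsCoprime B A) (hn₀ : IsCoprime (A * n₀ + B) D)
    (hx : (A * (2 * X) + B) / m ≤ x) (hq : (4 * (A * D) : ℕ) ≤ x) :
    |(#(primeMultipleArgs X A D B n₀ m) : ℝ) -
      #(cofactorPrimes X A B m) / (4 * (A * D)).totient| ≤ 2 * Eerr x (4 * (A * D)) := by
  have hs : IsCoprime (A * n₀ + B) ((A * D : ℕ) : ℤ) := by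
    rw [Nat.cast_mul]
    exact IsCoprime.mul_right ((IsCoprime.mul_add_left_left_iff).2 hBA) hn₀
  obtain ⟨c, hc, hiff⟩ := exists_residue_of_mul_modEq (by positivity) h4 hmAD hs
  rw [Nat.cast_mul] at hiff
  rw [card_primeMultipleArgs hX hA hB hm hiff]
  refine abs_card_filter_primesIoc_sub_le ?_ hx (Nat.succ_le_of_lt (by positivity)) hq hc
  gcongr
  linarith

theorem InP1.coprime_inP3 {m r : ℕ} (hm : InP1 m) (hr : InP3 r) : m.Coprime r :=
  Nat.coprime_of_dvd fun p hp hpm hpr ↦ by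
    have h1 := hm p hp hpm
    have h3 := hr p hp hpr
    omega

theorem inP1_prime {p : ℕ} (hp : p.Prime) (h : p % 4 = 1) : InP1 p :=
  pow_one p ▸ inP1_prime_pow hp h 1

theorem InP3.coprime_two {n : ℕ} (hn : InP3 n) : Nat.Coprime 2 n :=
  Nat.prime_two.coprime_iff_not_dvd.2 fun h ↦ absurd (hn 2 Nat.prime_two h) (by norm_num)

theorem filter_dvd_primeMultipleArgs_eq_biUnion {X : ℝ} {A W m r : ℕ} {B v₀ : ℤ} {F : ℤ → ℤ}
    (hF : PreservesModEq F) (hm : InP1 m) (hr : 0 < r) (hr3 : InP3 r) :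
    {n ∈ primeMultipleArgs X A W B v₀ m | (r : ℤ) ∣ F n} =
      (unitRoots F (fun t ↦ A * t + B) r).biUnion
        fun t ↦ {n ∈ primeMultipleArgs X A W B v₀ m | n ≡ (t : ℕ) [ZMOD r]} := by
  ext n
  simp only [mem_biUnion, mem_filter, mem_unitRoots]
  constructor
  · rintro ⟨hn, hdvd⟩
    obtain ⟨t, ht, hmod⟩ := Int.existsUnique_equiv_nat n (Nat.cast_pos.2 hr : (0 : ℤ) < r)
    obtain ⟨-, -, p, hp, hp4, h⟩ := mem_primeMultipleArgs.1 hn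
    refine ⟨t, ⟨Nat.cast_lt.1 ht, (hF hmod).dvd_iff.2 hdvd, ?_⟩, hn, hmod.symm⟩
    refine (isCoprime_iff_of_modEq (preservesModEq_linear A B hmod)).2 ?_
    change IsCoprime (A * n + B) (r : ℤ)
    rw [← h, ← Nat.cast_mul]
    exact Nat.isCoprime_iff_coprime.2 ((hm.mul (inP1_prime hp hp4)).coprime_inP3 hr3)
  · rintro ⟨t, ⟨-, hdvd, -⟩, hn, hmod⟩
    exact ⟨hn, (hF hmod).dvd_iff.2 hdvd⟩

theorem filter_modEq_primeMultipleArgs {X : ℝ} {A W m r t : ℕ} {B v₀ : ℤ} (hWr : W.Coprime r) :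
    ∃ n₀ : ℤ, n₀ ≡ v₀ [ZMOD W] ∧ n₀ ≡ t [ZMOD r] ∧
      {n ∈ primeMultipleArgs X A W B v₀ m | n ≡ (t : ℕ) [ZMOD r]} =
        primeMultipleArgs X A (W * r) B n₀ m := by
  obtain ⟨u, v, huv⟩ := Nat.isCoprime_iff_coprime.2 hWr
  have hW : v₀ * (v * r) + t * (u * W) ≡ v₀ [ZMOD W] :=
    Int.modEq_iff_dvd.2 ⟨u * v₀ - t * u, by linear_combination (-v₀) * huv⟩
  have hr : v₀ * (v * r) + t * (u * W) ≡ t [ZMOD r] :=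
    Int.modEq_iff_dvd.2 ⟨v * t - v₀ * v, by linear_combination (-(t : ℤ)) * huv⟩
  refine ⟨_, hW, hr, ?_⟩
  ext n
  have hiff : n ≡ v₀ * (v * r) + t * (u * W) [ZMOD (W * r : ℕ)] ↔
      n ≡ v₀ [ZMOD W] ∧ n ≡ t [ZMOD r] := by
    rw [Nat.cast_mul, ← Int.modEq_and_modEq_iff_modEq_mul (by simpa using hWr)]
    exact ⟨fun h ↦ ⟨h.1.trans hW, h.2.trans hr⟩, fun h ↦ ⟨h.1.trans hW.symm, h.2.trans hr.symm⟩⟩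
  rw [mem_filter, mem_primeMultipleArgs, mem_primeMultipleArgs, hiff]
  tauto

theorem abs_card_filter_dvd_primeMultipleArgs_sub_le {X x : ℝ} {A W m r : ℕ} {B v₀ : ℤ}
    {F : ℤ → ℤ} (hX : 0 ≤ X) (hF : PreservesModEq F) (hA : 0 < A) (hB : 0 ≤ B) (hW : 0 < W)
    (hr : 0 < r) (hr3 : InP3 r) (hm : 0 < m) (hm1 : InP1 m) (h4 : Nat.Coprime 4 (A * (W * r)))
    (hmr : m.Coprime (A * (W * r))) (hWr : W.Coprime r) (hBA : IsCoprime B A)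
    (hv₀ : IsCoprime (A * v₀ + B) W) (hx : (A * (2 * X) + B) / m ≤ x)
    (hq : (4 * (A * (W * r)) : ℕ) ≤ x) :
    |(#{n ∈ primeMultipleArgs X A W B v₀ m | (r : ℤ) ∣ F n} : ℝ) -
      #(unitRoots F (fun t ↦ A * t + B) r) *
        (#(cofactorPrimes X A B m) / (4 * (A * (W * r))).totient)| ≤
      #(unitRoots F (fun t ↦ A * t + B) r) * (2 * Eerr x (4 * (A * (W * r)))) := by
  rw [filter_dvd_primeMultipleArgs_eq_biUnion hF hm1 hr hr3, card_biUnion, ← nsmul_eq_mul,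
    ← nsmul_eq_mul, ← sum_const, ← sum_const, Nat.cast_sum, ← sum_sub_distrib]
  · refine (abs_sum_le_sum_abs _ _).trans (sum_le_sum fun t ht ↦ ?_)
    obtain ⟨n₀, hn₀W, hn₀r, hfilter⟩ := filter_modEq_primeMultipleArgs
      (X := X) (A := A) (m := m) (t := t) (B := B) (v₀ := v₀) hWr
    rw [hfilter]
    refine abs_card_primeMultipleArgs_sub_le hX hA hB hm (by positivity) h4 hmr hBA ?_ hx hq
    rw [Nat.cast_mul]
    exact IsCoprime.mul_right
      ((isCoprime_iff_of_modEq (preservesModEq_linear A B hn₀W)).2 hv₀)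
      ((isCoprime_iff_of_modEq (preservesModEq_linear A B hn₀r)).2 (mem_unitRoots.1 ht).2.2)
  · intro t ht s hs hts
    refine disjoint_filter.2 fun n _ ht' hs' ↦ hts ?_
    exact (Int.natCast_modEq_iff.1 (ht'.symm.trans hs')).eq_of_lt_of_lt (mem_unitRoots.1 ht).1
      (mem_unitRoots.1 hs).1

end PrimeMultiples

section DivisorWeights

open Finset

theorem one_add_pow_card_primeFactors {R : Type*} [CommSemiring R] (x : R) {n : ℕ}
    (hn : Squarefree n) :
    (1 + x) ^ #n.primeFactors = ∑ d ∈ n.divisors, x ^ #d.primeFactors := by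
  let f := ArithmeticFunction.prodPrimeFactors fun _ ↦ x
  have hf {d : ℕ} (hd : d ≠ 0) : f d = x ^ #d.primeFactors := by
    rw [ArithmeticFunction.prodPrimeFactors_apply hd, prod_const]
  have h := (ArithmeticFunction.IsMultiplicative.prodPrimeFactors fun _ ↦ x
    ).prodPrimeFactors_one_add_of_squarefree hn
  rw [sum_congr rfl fun d hd ↦ hf (Nat.pos_of_mem_divisors hd).ne'] at h
  rw [← h, ← prod_const]
  refine prod_congr rfl fun p hp ↦ ?_
  have hp := Nat.prime_of_mem_primeFactors hp
  change _ = 1 + f p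
  rw [hf hp.ne_zero, hp.primeFactors, card_singleton, pow_one]

theorem sum_inv_filter_dvd_le (N : ℕ) {d : ℕ} (hd : 0 < d) :
    ∑ n ∈ Ioc 0 N with d ∣ n, (n : ℝ)⁻¹ ≤ (d : ℝ)⁻¹ * harmonic N := by
  rw [harmonic_eq_sum_Ioc, mul_sum]
  calc ∑ n ∈ Ioc 0 N with d ∣ n, (n : ℝ)⁻¹
      ≤ ∑ n ∈ (Ioc 0 N).image (d * ·), (n : ℝ)⁻¹ := by
        refine sum_le_sum_of_subset_of_nonneg (fun n hn ↦ ?_) fun _ _ _ ↦ by positivity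
        rw [mem_filter, mem_Ioc] at hn
        obtain ⟨⟨hn0, hnN⟩, e, rfl⟩ := hn
        exact mem_image_of_mem _ <| mem_Ioc.2
          ⟨Nat.pos_of_mul_pos_left hn0, (Nat.le_mul_of_pos_left e hd).trans hnN⟩
    _ = ∑ e ∈ Ioc 0 N, (d : ℝ)⁻¹ * (e : ℝ)⁻¹ := by
        rw [sum_image fun _ _ _ _ h ↦ Nat.eq_of_mul_eq_mul_left hd h]
        exact sum_congr rfl fun e _ ↦ by rw [Nat.cast_mul, mul_inv]

theorem sum_sum_divisors_mul_inv_le (N : ℕ) {f : ℕ → ℝ} (hf : ∀ d, 0 ≤ f d) :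
    ∑ n ∈ Ioc 0 N with Squarefree n, (∑ d ∈ n.divisors, f d) * (n : ℝ)⁻¹ ≤
      (∑ d ∈ Ioc 0 N with Squarefree d, f d * (d : ℝ)⁻¹) * harmonic N := by
  set S := {n ∈ Ioc 0 N | Squarefree n} with hS
  calc ∑ n ∈ S, (∑ d ∈ n.divisors, f d) * (n : ℝ)⁻¹
      = ∑ n ∈ S, ∑ d ∈ n.divisors, f d * (n : ℝ)⁻¹ := by simp_rw [sum_mul]
    _ = ∑ d ∈ S, ∑ n ∈ S with d ∣ n, f d * (n : ℝ)⁻¹ := by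
        refine sum_comm' fun n d ↦ ?_
        simp only [hS, mem_filter, mem_Ioc, Nat.mem_divisors]
        constructor
        · rintro ⟨⟨⟨hn0, hnN⟩, hn⟩, hdn, -⟩
          exact ⟨⟨⟨⟨hn0, hnN⟩, hn⟩, hdn⟩, ⟨Nat.pos_of_dvd_of_pos hdn hn0,
            (Nat.le_of_dvd hn0 hdn).trans hnN⟩, hn.squarefree_of_dvd hdn⟩
        · rintro ⟨⟨hn, hdn⟩, -⟩
          exact ⟨hn, hdn, hn.1.1.ne'⟩
    _ ≤ ∑ d ∈ S, f d * ((d : ℝ)⁻¹ * harmonic N) := by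
        refine sum_le_sum fun d hd ↦ ?_
        rw [← mul_sum]
        refine mul_le_mul_of_nonneg_left (le_trans ?_
          (sum_inv_filter_dvd_le N (mem_Ioc.1 (mem_filter.1 hd).1).1)) (hf d)
        exact sum_le_sum_of_subset_of_nonneg (filter_subset_filter _ (filter_subset _ _))
          fun _ _ _ ↦ by positivity
    _ = (∑ d ∈ S, f d * (d : ℝ)⁻¹) * harmonic N := by simp_rw [sum_mul, mul_assoc]

theorem sum_pow_card_primeFactors_mul_inv_le (N G : ℕ) :
    ∑ n ∈ Ioc 0 N with Squarefree n, (G : ℝ) ^ #n.primeFactors * (n : ℝ)⁻¹ ≤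
      (harmonic N : ℝ) ^ G := by
  induction G with
  | zero =>
    rw [pow_zero, Nat.cast_zero]
    calc ∑ n ∈ Ioc 0 N with Squarefree n, (0 : ℝ) ^ #n.primeFactors * (n : ℝ)⁻¹
        ≤ ∑ n ∈ Ioc 0 N with Squarefree n, if n = 1 then (1 : ℝ) else 0 := by
          refine sum_le_sum fun n hn ↦ ?_
          split_ifs with h
          · simp [h]
          · have hn0 := (mem_Ioc.1 (mem_filter.1 hn).1).1
            have : #n.primeFactors ≠ 0 :=
              card_ne_zero.2 (Nat.nonempty_primeFactors.2 (by omega))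
            rw [zero_pow this, zero_mul]
      _ ≤ 1 := by
          rw [sum_ite_eq']
          split_ifs <;> norm_num
  | succ G ih =>
    calc ∑ n ∈ Ioc 0 N with Squarefree n, ((G + 1 : ℕ) : ℝ) ^ #n.primeFactors * (n : ℝ)⁻¹
        = ∑ n ∈ Ioc 0 N with Squarefree n,
            (∑ d ∈ n.divisors, (G : ℝ) ^ #d.primeFactors) * (n : ℝ)⁻¹ := by
          refine sum_congr rfl fun n hn ↦ ?_
          rw [Nat.cast_succ, add_comm, one_add_pow_card_primeFactors _ (mem_filter.1 hn).2]
      _ ≤ (harmonic N : ℝ) ^ (G + 1) := by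
          refine (sum_sum_divisors_mul_inv_le N fun d ↦ by positivity).trans ?_
          rw [pow_succ]
          refine mul_le_mul_of_nonneg_right ih ?_
          rw [harmonic_eq_sum_Ioc]
          positivity

-- Splitting at `z = g ^ ω(r)` versus `T` through `z ≤ T + z ^ 2 / T` trades the average bound `S`
-- for the weighted sum against the pointwise bound on `E`.
theorem sum_pow_card_primeFactors_mul_le {R : Finset ℕ} {N g : ℕ} {E : ℕ → ℝ} {S V T : ℝ}
    (hR : R ⊆ {r ∈ Ioc 0 N | Squarefree r}) (hT : 0 < T) (hV : 0 ≤ V)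
    (hE0 : ∀ r ∈ R, 0 ≤ E r) (hE : ∀ r ∈ R, E r ≤ V * 2 ^ #r.primeFactors * (r : ℝ)⁻¹)
    (hS : ∑ r ∈ R, E r ≤ S) :
    ∑ r ∈ R, (g : ℝ) ^ #r.primeFactors * E r ≤
      T * S + V / T * (harmonic N : ℝ) ^ (2 * g ^ 2) := by
  have hsplit (r : ℕ) (hr : r ∈ R) : (g : ℝ) ^ #r.primeFactors * E r ≤
      T * E r + V / T * (((2 * g ^ 2 : ℕ) : ℝ) ^ #r.primeFactors * (r : ℝ)⁻¹) := by
    set z := (g : ℝ) ^ #r.primeFactors with hz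
    have hzT : z ≤ T + z ^ 2 / T := by
      rw [← sub_le_iff_le_add', le_div_iff₀ hT]
      nlinarith [sq_nonneg (z - T), sq_nonneg (z + T)]
    calc z * E r ≤ (T + z ^ 2 / T) * E r := mul_le_mul_of_nonneg_right hzT (hE0 r hr)
      _ ≤ T * E r + z ^ 2 / T * (V * 2 ^ #r.primeFactors * (r : ℝ)⁻¹) := by
          rw [add_mul]
          gcongr
          exact hE r hr
      _ = T * E r + V / T * (((2 * g ^ 2 : ℕ) : ℝ) ^ #r.primeFactors * (r : ℝ)⁻¹) := by
          rw [hz, Nat.cast_mul, mul_pow, Nat.cast_pow, Nat.cast_ofNat, pow_right_comm]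
          ring
  calc ∑ r ∈ R, (g : ℝ) ^ #r.primeFactors * E r
      ≤ T * ∑ r ∈ R, E r +
          V / T * ∑ r ∈ R, ((2 * g ^ 2 : ℕ) : ℝ) ^ #r.primeFactors * (r : ℝ)⁻¹ := by
        rw [mul_sum, mul_sum, ← sum_add_distrib]
        exact sum_le_sum hsplit
    _ ≤ T * S + V / T * (harmonic N : ℝ) ^ (2 * g ^ 2) := by
        gcongr
        exact (sum_le_sum_of_subset_of_nonneg hR fun _ _ _ ↦ by positivity).trans
          (sum_pow_card_primeFactors_mul_inv_le N _)

theorem sum_lcm_le {D R : Finset ℕ} {g : ℕ → ℝ} (hD : ∀ d ∈ D, ∀ e ∈ D, d.lcm e ∈ R)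
    (hR : ∀ r ∈ R, Squarefree r) (hg : ∀ r ∈ R, 0 ≤ g r) :
    ∑ d ∈ D, ∑ e ∈ D, g (d.lcm e) ≤ ∑ r ∈ R, 3 ^ #r.primeFactors * g r := by
  rw [← sum_product' D D (fun d e ↦ g (d.lcm e)),
    ← sum_fiberwise_of_maps_to (t := R) (g := fun x : ℕ × ℕ ↦ x.1.lcm x.2) fun x hx ↦
      hD _ (mem_product.1 hx).1 _ (mem_product.1 hx).2]
  refine sum_le_sum fun r hr ↦ ?_
  rw [sum_congr rfl fun x hx ↦ congrArg g (mem_filter.1 hx).2, sum_const, nsmul_eq_mul]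
  refine mul_le_mul_of_nonneg_right ?_ (hg r hr)
  have hcard := Nat.card_pair_lcm_eq (hR r hr)
  rw [ArithmeticFunction.cardDistinctFactors_apply, ← List.card_toFinset] at hcard
  have hr0 := (hR r hr).ne_zero
  have hsub : {x ∈ D ×ˢ D | x.1.lcm x.2 = r} ⊆
      {x ∈ r.divisors ×ˢ r.divisors | x.1.lcm x.2 = r} := fun x hx ↦ by
    have hx := (mem_filter.1 hx).2
    exact mem_filter.2 ⟨mem_product.2 ⟨Nat.mem_divisors.2 ⟨hx ▸ Nat.dvd_lcm_left _ _, hr0⟩,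
      Nat.mem_divisors.2 ⟨hx ▸ Nat.dvd_lcm_right _ _, hr0⟩⟩, hx⟩
  exact_mod_cast (card_le_card hsub).trans hcard.le

theorem totient_of_squarefree {n : ℕ} (hn : Squarefree n) :
    n.totient = ∏ p ∈ n.primeFactors, (p - 1) := by
  rw [Nat.totient_eq_div_primeFactors_mul, Nat.prod_primeFactors_of_squarefree hn,
    Nat.div_self (Nat.pos_of_ne_zero hn.ne_zero), one_mul]

theorem le_two_pow_card_primeFactors_mul_totient {n : ℕ} (hn : Squarefree n) :
    n ≤ 2 ^ #n.primeFactors * n.totient := by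
  rw [totient_of_squarefree hn, ← prod_const, ← prod_mul_distrib]
  refine (Nat.prod_primeFactors_of_squarefree hn).ge.trans (prod_le_prod' fun p hp ↦ ?_)
  have := (Nat.prime_of_mem_primeFactors hp).two_le
  omega

end DivisorWeights

section Sieve

open Finset

open scoped Classical in
/-- The moduli of the sieve: the squarefree elements of `⟨P3⟩` up to `N` that are prime to `M`. -/
noncomputable def sieveModuli (N M : ℕ) : Finset ℕ :=
  {d ∈ Ioc 0 N | Squarefree d ∧ InP3 d ∧ d.Coprime M}

theorem mem_sieveModuli {N M d : ℕ} :
    d ∈ sieveModuli N M ↔ d ≤ N ∧ Squarefree d ∧ InP3 d ∧ d.Coprime M := by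
  classical
  rw [sieveModuli, mem_filter, mem_Ioc, and_assoc, and_iff_right_of_imp]
  exact fun h ↦ Nat.pos_of_ne_zero h.2.1.ne_zero

theorem squarefree_lcm {d e : ℕ} (hd : Squarefree d) (he : Squarefree e) :
    Squarefree (d.lcm e) := by
  have hde := Nat.lcm_ne_zero hd.ne_zero he.ne_zero
  rw [Nat.squarefree_iff_factorization_le_one hde, Nat.factorization_lcm hd.ne_zero he.ne_zero]
  exact fun p ↦ max_le (hd.natFactorization_le_one p) (he.natFactorization_le_one p)

theorem lcm_mem_sieveModuli {N M d e : ℕ} (hd : d ∈ sieveModuli N M) (he : e ∈ sieveModuli N M) :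
    d.lcm e ∈ sieveModuli (N ^ 2) M := by
  rw [mem_sieveModuli] at *
  have hle : d.lcm e ≤ d * e := Nat.le_of_dvd
    (Nat.pos_of_ne_zero (mul_ne_zero hd.2.1.ne_zero he.2.1.ne_zero)) (Nat.lcm_dvd_mul d e)
  exact ⟨hle.trans (sq N ▸ Nat.mul_le_mul hd.1 he.1), squarefree_lcm hd.2.1 he.2.1,
    fun p hp hpde ↦ (hp.dvd_lcm.1 hpde).elim (hd.2.2.1 p hp) (he.2.2.1 p hp),
    (hd.2.2.2.mul_left he.2.2.2).coprime_dvd_left (Nat.lcm_dvd_mul d e)⟩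

theorem primeFactors_lcm {d e : ℕ} (hd : d ≠ 0) (he : e ≠ 0) :
    (d.lcm e).primeFactors = (d * e).primeFactors := by
  rw [Nat.primeFactors_mul hd he]
  ext p
  rw [mem_union, Nat.mem_primeFactors_of_ne_zero (Nat.lcm_ne_zero hd he),
    Nat.mem_primeFactors_of_ne_zero hd, Nat.mem_primeFactors_of_ne_zero he, ← and_or_left]
  exact and_congr_right fun hp ↦ hp.dvd_lcm

/-- The weight `(∑_{d ∣ N} λ_d)²` of the sieve. -/
noncomputable def sieveWeight (lam : ℕ → ℝ) (N : ℤ) : ℝ := (∑ d ∈ N.natAbs.divisors, lam d) ^ 2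

/-- The quadratic form `∑_{d,e} λ_d λ_e ∏_{p ∣ de} (ν(p) - 1) / (p - 1)`, with `d` and `e` ranging
over `D`. -/
noncomputable def sieveForm (ν : ℕ → ℕ) (lam : ℕ → ℝ) (D : Finset ℕ) : ℝ :=
  ∑ d ∈ D, ∑ e ∈ D, lam d * lam e * ∏ p ∈ (d * e).primeFactors, ((ν p : ℝ) - 1) / ((p : ℝ) - 1)

theorem sieveForm_of_subset (ν : ℕ → ℕ) {lam : ℕ → ℝ} {D D' : Finset ℕ} (h : D ⊆ D')
    (hlam : ∀ d ∉ D, lam d = 0) : sieveForm ν lam D' = sieveForm ν lam D := by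
  rw [sieveForm, sieveForm, ← sum_subset h fun d _ hd ↦ by simp only [hlam d hd, zero_mul,
    sum_const_zero]]
  refine sum_congr rfl fun d _ ↦ (sum_subset h fun e _ he ↦ ?_).symm
  rw [hlam e he, mul_zero, zero_mul]

theorem sieveWeight_eq_sum {D : Finset ℕ} {lam : ℕ → ℝ} {N : ℤ} (hN : N ≠ 0)
    (hlam : ∀ d ∉ D, lam d = 0) :
    sieveWeight lam N =
      ∑ d ∈ D, ∑ e ∈ D, lam d * lam e * if (d.lcm e : ℤ) ∣ N then (1 : ℝ) else 0 := by
  have hsum : ∑ d ∈ N.natAbs.divisors, lam d = ∑ d ∈ D, if (d : ℤ) ∣ N then lam d else 0 := by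
    rw [← sum_filter]
    refine (sum_subset (fun d hd ↦ ?_) fun d hdN hdD ↦ ?_).symm
    · exact Nat.mem_divisors.2 ⟨Int.natCast_dvd.1 (mem_filter.1 hd).2, Int.natAbs_ne_zero.2 hN⟩
    · exact hlam d fun h ↦ hdD <| mem_filter.2
        ⟨h, Int.natCast_dvd.2 (Nat.dvd_of_mem_divisors hdN)⟩
  rw [sieveWeight, hsum, sq, sum_mul_sum]
  refine sum_congr rfl fun d _ ↦ sum_congr rfl fun e _ ↦ ?_
  simp only [Int.natCast_dvd, Nat.lcm_dvd_iff, ite_and]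
  split_ifs <;> simp

theorem sub_le_sum_sieveWeight {S : Finset ℤ} {F : ℤ → ℤ} {D : Finset ℕ} {lam : ℕ → ℝ} {Λ : ℝ}
    {V E : ℕ → ℝ} (hS : ∀ n ∈ S, F n ≠ 0) (hlam : ∀ d ∉ D, lam d = 0) (hΛ : ∀ d, |lam d| ≤ Λ)
    (h : ∀ d ∈ D, ∀ e ∈ D,
      |(#{n ∈ S | (d.lcm e : ℤ) ∣ F n} : ℝ) - V (d.lcm e)| ≤ E (d.lcm e)) :
    ∑ d ∈ D, ∑ e ∈ D, lam d * lam e * V (d.lcm e) - Λ ^ 2 * ∑ d ∈ D, ∑ e ∈ D, E (d.lcm e) ≤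
      ∑ n ∈ S, sieveWeight lam (F n) := by
  have hexpand : ∑ n ∈ S, sieveWeight lam (F n) =
      ∑ d ∈ D, ∑ e ∈ D, lam d * lam e * #{n ∈ S | (d.lcm e : ℤ) ∣ F n} := by
    rw [sum_congr rfl fun n hn ↦ sieveWeight_eq_sum (hS n hn) hlam, sum_comm]
    refine sum_congr rfl fun d _ ↦ ?_
    rw [sum_comm]
    exact sum_congr rfl fun e _ ↦ by rw [← mul_sum, sum_boole]
  have hΛ0 : 0 ≤ Λ := (abs_nonneg _).trans (hΛ 0)
  simp_rw [hexpand, mul_sum, ← sum_sub_distrib]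
  refine sum_le_sum fun d hd ↦ sum_le_sum fun e he ↦ ?_
  have hde : |lam d * lam e| ≤ Λ ^ 2 := by
    rw [abs_mul, sq]
    exact mul_le_mul (hΛ d) (hΛ e) (abs_nonneg _) hΛ0
  have hdiff := (abs_mul (lam d * lam e) _).trans_le
    (mul_le_mul hde (h d hd e he) (abs_nonneg _) (sq_nonneg Λ))
  linarith [(neg_le_abs _).trans hdiff]

theorem card_unitRoots_eq_prod_sub_one {F G : ℤ → ℤ} (hF : PreservesModEq F)
    (hG : PreservesModEq G) {ν : ℕ → ℕ} {r : ℕ} (hr : Squarefree r)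
    (hν : ∀ p ∈ r.primeFactors, #(unitRoots F G p) + 1 = ν p) :
    (#(unitRoots F G r) : ℝ) = ∏ p ∈ r.primeFactors, ((ν p : ℝ) - 1) := by
  rw [card_unitRoots_of_squarefree hF hG hr, Nat.cast_prod]
  refine prod_congr rfl fun p hp ↦ ?_
  rw [← hν p hp, Nat.cast_succ, add_sub_cancel_right]

theorem totient_four_mul {D r : ℕ} (h4 : Nat.Coprime 4 (D * r)) (hr : D.Coprime r) :
    (4 * (D * r)).totient = 2 * D.totient * r.totient := by
  rw [Nat.totient_mul h4, Nat.totient_mul hr, mul_assoc]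
  rfl

theorem card_unitRoots_mul_div_totient {F G : ℤ → ℤ} (hF : PreservesModEq F)
    (hG : PreservesModEq G) {ν : ℕ → ℕ} {D r : ℕ} (hr : Squarefree r)
    (hν : ∀ p ∈ r.primeFactors, #(unitRoots F G p) + 1 = ν p) (h4 : Nat.Coprime 4 (D * r))
    (hDr : D.Coprime r) (y : ℝ) :
    #(unitRoots F G r) * (y / (4 * (D * r)).totient) =
      y / (2 * D.totient) * ∏ p ∈ r.primeFactors, ((ν p : ℝ) - 1) / ((p : ℝ) - 1) := by
  have hφ : (r.totient : ℝ) = ∏ p ∈ r.primeFactors, ((p : ℝ) - 1) := by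
    rw [totient_of_squarefree hr, Nat.cast_prod]
    exact prod_congr rfl fun p hp ↦ Nat.cast_pred (Nat.prime_of_mem_primeFactors hp).pos
  rw [card_unitRoots_eq_prod_sub_one hF hG hr hν, totient_four_mul h4 hDr, prod_div_distrib, ← hφ]
  push_cast
  ring

theorem sum_card_unitRoots_eq_sieveForm {F G : ℤ → ℤ} (hF : PreservesModEq F)
    (hG : PreservesModEq G) {ν : ℕ → ℕ} {N M D : ℕ} {lam : ℕ → ℝ} {y : ℝ}
    (hν : ∀ r ∈ sieveModuli (N ^ 2) M, ∀ p ∈ r.primeFactors, #(unitRoots F G p) + 1 = ν p)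
    (h4 : ∀ r ∈ sieveModuli (N ^ 2) M, Nat.Coprime 4 (D * r))
    (hD : ∀ r ∈ sieveModuli (N ^ 2) M, D.Coprime r) :
    ∑ d ∈ sieveModuli N M, ∑ e ∈ sieveModuli N M, lam d * lam e *
      (#(unitRoots F G (d.lcm e)) * (y / (4 * (D * d.lcm e)).totient)) =
      y / (2 * D.totient) * sieveForm ν lam (sieveModuli N M) := by
  simp_rw [sieveForm, mul_sum]
  refine sum_congr rfl fun d hd ↦ sum_congr rfl fun e he ↦ ?_
  have hr := lcm_mem_sieveModuli hd he
  rw [card_unitRoots_mul_div_totient hF hG (mem_sieveModuli.1 hr).2.1 (hν _ hr) (h4 _ hr)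
    (hD _ hr), mul_left_comm,
    primeFactors_lcm (mem_sieveModuli.1 hd).2.1.ne_zero (mem_sieveModuli.1 he).2.1.ne_zero]

theorem Eerr_le_of_squarefree_dvd {x : ℝ} {q r : ℕ} (hr : Squarefree r) (hrq : r ∣ q) (hq : 1 ≤ q)
    (hqx : q ≤ x) : Eerr x q ≤ 2 * x * 2 ^ #r.primeFactors * (r : ℝ)⁻¹ := by
  have hx : 0 ≤ x := (Nat.cast_nonneg q).trans hqx
  have hr0 : (0 : ℝ) < r := Nat.cast_pos.2 (Nat.pos_of_ne_zero hr.ne_zero)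
  have hφ : (r : ℝ) ≤ 2 ^ #r.primeFactors * q.totient := by
    have hle := (le_two_pow_card_primeFactors_mul_totient hr).trans (Nat.mul_le_mul_left _
      (Nat.le_of_dvd (Nat.totient_pos.2 hq) (Nat.totient_dvd_of_dvd hrq)))
    exact_mod_cast hle
  refine (Eerr_le hq hqx).trans ?_
  rw [← div_eq_mul_inv, div_le_div_iff₀ (Nat.cast_pos.2 (Nat.totient_pos.2 hq)) hr0,
    mul_assoc (2 * x)]
  gcongr

theorem card_unitRoots_le_pow {F G : ℤ → ℤ} (hF : PreservesModEq F) (hG : PreservesModEq G)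
    {r k : ℕ} (hr : Squarefree r) (hk : ∀ p ∈ r.primeFactors, #(unitRoots F G p) ≤ k) :
    #(unitRoots F G r) ≤ k ^ #r.primeFactors := by
  rw [card_unitRoots_of_squarefree hF hG hr, ← prod_const]
  exact prod_le_prod' hk

theorem sum_card_unitRoots_mul_Eerr_le {F G : ℤ → ℤ} (hF : PreservesModEq F)
    (hG : PreservesModEq G) {N M D k : ℕ} {x S T : ℝ}
    (hk : ∀ r ∈ sieveModuli (N ^ 2) M, ∀ p ∈ r.primeFactors, #(unitRoots F G p) ≤ k)
    (hD : 0 < D) (hx : ∀ r ∈ sieveModuli (N ^ 2) M, ((4 * (D * r) : ℕ) : ℝ) ≤ x) (hx0 : 0 ≤ x)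
    (hT : 0 < T) (hS : ∑ r ∈ sieveModuli (N ^ 2) M, Eerr x (4 * (D * r)) ≤ S) :
    ∑ d ∈ sieveModuli N M, ∑ e ∈ sieveModuli N M,
      #(unitRoots F G (d.lcm e)) * (2 * Eerr x (4 * (D * d.lcm e))) ≤
        2 * (T * S + 2 * x / T * (harmonic (N ^ 2) : ℝ) ^ (2 * (3 * k) ^ 2)) := by
  have hsq (r : ℕ) (hr : r ∈ sieveModuli (N ^ 2) M) : Squarefree r := (mem_sieveModuli.1 hr).2.1
  calc ∑ d ∈ sieveModuli N M, ∑ e ∈ sieveModuli N M,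
        #(unitRoots F G (d.lcm e)) * (2 * Eerr x (4 * (D * d.lcm e)))
      ≤ ∑ r ∈ sieveModuli (N ^ 2) M, 3 ^ #r.primeFactors *
          (#(unitRoots F G r) * (2 * Eerr x (4 * (D * r)))) :=
        sum_lcm_le (g := fun r ↦ #(unitRoots F G r) * (2 * Eerr x (4 * (D * r))))
          (fun _ hd _ he ↦ lcm_mem_sieveModuli hd he) hsq
          fun r _ ↦ mul_nonneg (Nat.cast_nonneg _) (mul_nonneg zero_le_two (Eerr_nonneg _ _))
    _ ≤ 2 * ∑ r ∈ sieveModuli (N ^ 2) M,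
          ((3 * k : ℕ) : ℝ) ^ #r.primeFactors * Eerr x (4 * (D * r)) := by
        rw [mul_sum]
        refine sum_le_sum fun r hr ↦ ?_
        have hcard : (#(unitRoots F G r) : ℝ) ≤ (k : ℝ) ^ #r.primeFactors := by
          exact_mod_cast card_unitRoots_le_pow hF hG (hsq r hr) (hk r hr)
        have hE := Eerr_nonneg x (4 * (D * r))
        calc 3 ^ #r.primeFactors * (#(unitRoots F G r) * (2 * Eerr x (4 * (D * r))))
            ≤ 3 ^ #r.primeFactors * ((k : ℝ) ^ #r.primeFactors * (2 * Eerr x (4 * (D * r)))) := by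
              gcongr
          _ = 2 * (((3 * k : ℕ) : ℝ) ^ #r.primeFactors * Eerr x (4 * (D * r))) := by
              rw [Nat.cast_mul, mul_pow, Nat.cast_ofNat]
              ring
    _ ≤ 2 * (T * S + 2 * x / T * (harmonic (N ^ 2) : ℝ) ^ (2 * (3 * k) ^ 2)) := by
        gcongr
        refine sum_pow_card_primeFactors_mul_le (fun r hr ↦ ?_) hT (by positivity)
          (fun r _ ↦ Eerr_nonneg _ _) (fun r hr ↦ ?_) hS
        · exact mem_filter.2 ⟨mem_Ioc.2 ⟨Nat.pos_of_ne_zero (hsq r hr).ne_zero,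
            (mem_sieveModuli.1 hr).1⟩, hsq r hr⟩
        · have hr0 : 0 < r := Nat.pos_of_ne_zero (hsq r hr).ne_zero
          exact Eerr_le_of_squarefree_dvd (hsq r hr) ⟨4 * D, by ring⟩
            (Nat.succ_le_of_lt (by positivity)) (hx r hr)

theorem sub_le_sum_sieveWeight_primeMultipleArgs {X x S T Λ : ℝ} {A W N M k m : ℕ} {B v₀ : ℤ}
    {F : ℤ → ℤ} {lam : ℕ → ℝ} {ν : ℕ → ℕ} (hX : 0 ≤ X) (hF : PreservesModEq F)
    (hF0 : ∀ n : ℤ, X < n → F n ≠ 0) (hA : 0 < A) (hA2 : A.Coprime 2) (hB : 0 ≤ B) (hW : 0 < W)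
    (hW3 : InP3 W) (hBA : IsCoprime B A) (hv₀ : IsCoprime (A * v₀ + B) W) (hm : 0 < m)
    (hm1 : InP1 m) (hmA : m.Coprime A) (hM : A * W ∣ M)
    (hlam : ∀ d ∉ sieveModuli N M, lam d = 0) (hΛ : ∀ d, |lam d| ≤ Λ)
    (hν : ∀ r ∈ sieveModuli (N ^ 2) M, ∀ p ∈ r.primeFactors,
      #(unitRoots F (fun t ↦ A * t + B) p) + 1 = ν p ∧ ν p ≤ k)
    (hx : (A * (2 * X) + B) / m ≤ x)
    (hq : ∀ r ∈ sieveModuli (N ^ 2) M, ((4 * (A * W * r) : ℕ) : ℝ) ≤ x) (hT : 0 < T)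
    (hS : ∑ r ∈ sieveModuli (N ^ 2) M, Eerr x (4 * (A * W * r)) ≤ S) :
    #(cofactorPrimes X A B m) / (2 * (A * W).totient) * sieveForm ν lam (sieveModuli N M) -
        2 * Λ ^ 2 * (T * S + 2 * x / T * (harmonic (N ^ 2) : ℝ) ^ (2 * (3 * k) ^ 2)) ≤
      ∑ n ∈ primeMultipleArgs X A W B v₀ m, sieveWeight lam (F n) := by
  have hG := preservesModEq_linear A B
  have hcop (r : ℕ) (hr : r ∈ sieveModuli (N ^ 2) M) :
      (A * W).Coprime r ∧ Nat.Coprime 4 (A * W * r) ∧ m.Coprime (A * W * r) := by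
    obtain ⟨-, -, hr3, hrM⟩ := mem_sieveModuli.1 hr
    exact ⟨(hrM.coprime_dvd_right hM).symm,
      ((hA2.symm.mul_right hW3.coprime_two).mul_right hr3.coprime_two).pow_left 2,
      (hmA.mul_right (hm1.coprime_inP3 hW3)).mul_right (hm1.coprime_inP3 hr3)⟩
  have hE := sum_card_unitRoots_mul_Eerr_le hF hG (k := k)
    (fun r hr p hp ↦ (Nat.le_succ _).trans ((hν r hr p hp).1.trans_le (hν r hr p hp).2))
    (by positivity) hq (le_trans (by positivity) hx) hT hS
  have key := sub_le_sum_sieveWeight (F := F) (S := primeMultipleArgs X A W B v₀ m)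
    (V := fun r ↦ #(unitRoots F (fun t ↦ A * t + B) r) *
      (#(cofactorPrimes X A B m) / (4 * (A * W * r)).totient))
    (E := fun r ↦ #(unitRoots F (fun t ↦ A * t + B) r) * (2 * Eerr x (4 * (A * W * r))))
    (fun n hn ↦ hF0 n (mem_primeMultipleArgs.1 hn).1.1) hlam hΛ fun d hd e he ↦ by
      have hr := lcm_mem_sieveModuli hd he
      obtain ⟨-, hsq, hr3, -⟩ := mem_sieveModuli.1 hr
      obtain ⟨hAWr, h4, hmr⟩ := hcop _ hr
      simp only [mul_assoc A W] at *
      exact abs_card_filter_dvd_primeMultipleArgs_sub_le hX hF hA hB hW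
        (Nat.pos_of_ne_zero hsq.ne_zero) hr3 hm hm1 h4 hmr (hAWr.coprime_mul_left)
        hBA hv₀ hx (hq _ hr)
  refine le_trans ?_ key
  rw [sum_card_unitRoots_eq_sieveForm hF hG (fun r hr p hp ↦ (hν r hr p hp).1)
    (fun r hr ↦ (hcop r hr).2.1) fun r hr ↦ (hcop r hr).1]
  nlinarith [mul_le_mul_of_nonneg_left hE (sq_nonneg Λ)]

end Sieve

section SumsOfTwoSquares

open Finset

theorem InP1.isSumTwoSquaresZ {n : ℕ} (hn : InP1 n) (hn0 : 0 < n) : IsSumTwoSquaresZ n := by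
  refine ⟨Nat.cast_pos.2 hn0, ?_⟩
  obtain ⟨u, v, huv⟩ := Nat.eq_sq_add_sq_iff.2 fun q hq h3 ↦ by
    have h1 := hn q (Nat.prime_of_mem_primeFactors hq) (Nat.dvd_of_mem_primeFactors hq)
    omega
  exact ⟨u, v, by exact_mod_cast huv⟩

theorem pairwiseDisjoint_primeMultipleArgs {X : ℝ} {A W M : ℕ} {B v₀ : ℤ} (hA : 0 < A)
    (hB : 0 ≤ B) (hM : (M : ℝ) * M ≤ X) :
    (Set.Ioc 0 M).PairwiseDisjoint (primeMultipleArgs X A W B v₀) := by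
  intro m hm m' hm' hne
  refine disjoint_left.2 fun n hn hn' ↦ hne ?_
  obtain ⟨⟨hXn, -⟩, -, p, hp, -, hmp⟩ := mem_primeMultipleArgs.1 hn
  obtain ⟨-, -, p', hp', -, hmp'⟩ := mem_primeMultipleArgs.1 hn'
  have heq : m * p = m' * p' := by exact_mod_cast hmp.trans hmp'.symm
  have hMp : M < p := by
    have hlt : (M : ℝ) * M < m * p := by
      have hval : (m : ℝ) * p = A * n + B := by exact_mod_cast hmp
      have hA1 : (1 : ℝ) ≤ A := Nat.one_le_cast.2 hA
      have hB0 : (0 : ℝ) ≤ B := Int.cast_nonneg hB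
      have : 0 ≤ X := (mul_self_nonneg _).trans hM
      nlinarith
    exact lt_of_mul_lt_mul_left' ((Nat.cast_lt (α := ℝ).1 (by exact_mod_cast hlt)).trans_le
      (Nat.mul_le_mul_right p hm.2))
  rcases hp.dvd_mul.1 (heq ▸ dvd_mul_left p m) with h | h
  · exact absurd (Nat.le_of_dvd hm'.1 h) (hm'.2.trans_lt hMp).not_ge
  · rw [(Nat.prime_dvd_prime_iff_eq hp hp').1 h] at heq
    exact Nat.eq_of_mul_eq_mul_right hp'.pos heq

open scoped Classical in
theorem sum_primeMultipleArgs_le {X : ℝ} {A W g M : ℕ} {B v₀ : ℤ} {w : ℤ → ℝ} (hA : 0 < A)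
    (hB : 0 ≤ B) (hg : 0 < g) (hg1 : InP1 g) (hM : (M : ℝ) * M ≤ X) (hw : ∀ n, 0 ≤ w n) :
    ∑ m ∈ Ioc 0 M with InP1 m ∧ m.Coprime A, ∑ n ∈ primeMultipleArgs X A W B v₀ m, w n ≤
      ∑ n ∈ Icc (⌊X⌋ + 1) ⌊2 * X⌋ with n ≡ v₀ [ZMOD W],
        if IsSumTwoSquaresZ (g * (A * n + B)) then w n else 0 := by
  rw [← sum_biUnion ((pairwiseDisjoint_primeMultipleArgs hA hB hM).subset fun m hm ↦ by
    simpa using (mem_filter.1 hm).1), ← sum_filter]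
  refine sum_le_sum_of_subset_of_nonneg (fun n hn ↦ ?_) fun n _ _ ↦ hw n
  obtain ⟨m, hm, hn⟩ := mem_biUnion.1 hn
  obtain ⟨hm, hm1, -⟩ := mem_filter.1 hm
  obtain ⟨hn, hmod, p, hp, hp4, hmp⟩ := mem_filter.1 hn
  refine mem_filter.2 ⟨mem_filter.2 ⟨hn, hmod⟩, ?_⟩
  rw [← hmp]
  exact_mod_cast (hg1.mul (hm1.mul (inP1_prime hp hp4))).isSumTwoSquaresZ
    (Nat.mul_pos hg (Nat.mul_pos (mem_Ioc.1 hm).1 hp.pos))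

end SumsOfTwoSquares

section SievePrimorial

open Finset

/-- The modulus `W` of the sieve: the product of the primes `p ≤ y` with `p ≡ 3 (mod 4)` other than
the exceptional prime `p₀`. -/
noncomputable def sievePrimorial (y : ℝ) (p₀ : ℕ) : ℕ :=
  ∏ p ∈ (range (⌊y⌋₊ + 1)).filter
    (fun p : ℕ ↦ p.Prime ∧ (p : ℝ) ≤ y ∧ p % 4 = 3 ∧ p ≠ p₀), p

theorem sievePrimorial_pos (y : ℝ) (p₀ : ℕ) : 0 < sievePrimorial y p₀ :=
  prod_pos fun _ hp ↦ (mem_filter.1 hp).2.1.pos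

theorem dvd_sievePrimorial_iff {y : ℝ} {p₀ q : ℕ} (hq : q.Prime) :
    q ∣ sievePrimorial y p₀ ↔ (q : ℝ) ≤ y ∧ q % 4 = 3 ∧ q ≠ p₀ := by
  constructor
  · intro h
    obtain ⟨p, hp, hqp⟩ := (Prime.dvd_finsetProd_iff hq.prime _).1 h
    obtain ⟨-, hp, hp'⟩ := mem_filter.1 hp
    rwa [(Nat.prime_dvd_prime_iff_eq hq hp).1 hqp]
  · intro h
    refine dvd_prod_of_mem _ (mem_filter.2 ⟨?_, hq, h⟩)
    exact mem_range.2 (Nat.lt_succ_of_le (Nat.le_floor h.1))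

theorem inP3_sievePrimorial (y : ℝ) (p₀ : ℕ) : InP3 (sievePrimorial y p₀) :=
  fun _ hq h ↦ ((dvd_sievePrimorial_iff hq).1 h).2.1

theorem coprime_sievePrimorial {p₀ : ℕ} (hp₀ : p₀.Prime) (y : ℝ) :
    p₀.Coprime (sievePrimorial y p₀) :=
  hp₀.coprime_iff_not_dvd.2 fun h ↦ ((dvd_sievePrimorial_iff hp₀).1 h).2.2 rfl

theorem sievePrimorial_le_four_rpow {y : ℝ} (hy : 0 ≤ y) (p₀ : ℕ) :
    (sievePrimorial y p₀ : ℝ) ≤ 4 ^ y := by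
  have hle : sievePrimorial y p₀ ≤ primorial ⌊y⌋₊ :=
    prod_le_prod_of_subset_of_one_le' (monotone_filter_right _ fun _ _ hp ↦ hp.1)
      fun p hp _ ↦ (mem_filter.1 hp).2.one_lt.le
  calc (sievePrimorial y p₀ : ℝ) ≤ (4 : ℝ) ^ (⌊y⌋₊ : ℝ) := by
        rw [Real.rpow_natCast]
        exact_mod_cast hle.trans (primorial_le_four_pow _)
    _ ≤ 4 ^ y := Real.rpow_le_rpow_of_exponent_le (by norm_num) (Nat.floor_le hy)

end SievePrimorial

section Asymptotics

open Filter Finset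
open Real (log exp)

theorem eventually_rpow_le_mul_rpow {s t ε : ℝ} (hst : s < t) (hε : 0 < ε) :
    ∀ᶠ L : ℝ in atTop, L ^ s ≤ ε * L ^ t := by
  filter_upwards [(tendsto_rpow_atTop (sub_pos.2 hst)).eventually_ge_atTop ε⁻¹,
    eventually_gt_atTop 0] with L hL hL0
  calc L ^ s = ε * ε⁻¹ * L ^ s := by rw [mul_inv_cancel₀ hε.ne', one_mul]
    _ ≤ ε * L ^ (t - s) * L ^ s := by gcongr
    _ = ε * L ^ t := by rw [mul_assoc, ← Real.rpow_add hL0, sub_add_cancel]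

theorem eventually_rpow_mul_log_one_add_le {ε : ℝ} (hε : 0 < ε) :
    ∀ᶠ L : ℝ in atTop, L ^ (2 / 5 : ℝ) * log (1 + L) ≤ ε * √L := by
  have hlog := (isLittleO_log_rpow_atTop (by norm_num : (0 : ℝ) < 1 / 10)).bound (half_pos hε)
  filter_upwards [hlog, eventually_ge_atTop 2] with L hlog hL
  have hL0 : 0 < L := by linarith
  rw [Real.norm_of_nonneg (Real.log_nonneg (by linarith)),
    Real.norm_of_nonneg (by positivity)] at hlog
  have hlog_one_add : log (1 + L) ≤ 2 * log L := by
    rw [← Nat.cast_ofNat, ← Real.log_pow]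
    exact Real.log_le_log (by linarith) (by nlinarith)
  calc L ^ (2 / 5 : ℝ) * log (1 + L) ≤ L ^ (2 / 5 : ℝ) * (ε * L ^ (1 / 10 : ℝ)) := by
        gcongr
        linarith
    _ = ε * √L := by
        rw [mul_left_comm, ← Real.rpow_add hL0, Real.sqrt_eq_rpow]
        norm_num

theorem eventually_one_add_pow_le_exp (C : ℕ) {ε : ℝ} (hε : 0 < ε) :
    ∀ᶠ L : ℝ in atTop, ∀ k : ℕ, (k : ℝ) ≤ L ^ (1 / 5 : ℝ) →
      (1 + L) ^ (C * k ^ 2) ≤ exp (ε * √L) := by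
  filter_upwards [eventually_rpow_mul_log_one_add_le (ε := ε / (C + 1)) (by positivity),
    eventually_ge_atTop 0] with L hL hL0 k hk
  have hk2 : (k : ℝ) ^ 2 ≤ L ^ (2 / 5 : ℝ) := by
    calc (k : ℝ) ^ 2 ≤ (L ^ (1 / 5 : ℝ)) ^ 2 := by gcongr
      _ = L ^ (2 / 5 : ℝ) := by
          rw [← Real.rpow_natCast, ← Real.rpow_mul hL0]
          norm_num
  have hlog : 0 ≤ log (1 + L) := Real.log_nonneg (by linarith)
  rw [← Real.log_le_iff_le_exp (by positivity), Real.log_pow]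
  calc ((C * k ^ 2 : ℕ) : ℝ) * log (1 + L) ≤ (C + 1) * (L ^ (2 / 5 : ℝ) * log (1 + L)) := by
        push_cast
        rw [mul_assoc]
        gcongr
        linarith
    _ ≤ (C + 1) * (ε / (C + 1) * √L) := by gcongr
    _ = ε * √L := by field_simp

theorem exp_mul_log {X : ℝ} (hX : 0 < X) (s : ℝ) : exp (s * log X) = X ^ s := by
  rw [Real.rpow_def_of_pos hX, mul_comm]

theorem eventually_modulus_lt : ∀ᶠ X : ℝ in atTop,
    4 * log X ^ (1 / 3 : ℝ) * 4 ^ (2 * log X ^ (1 / 3 : ℝ)) * X ^ (1 / 5 : ℝ) <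
      (X ^ (9 / 10 : ℝ)) ^ (2 / 5 : ℝ) := by
  filter_upwards [Real.tendsto_log_atTop.eventually (eventually_rpow_le_mul_rpow
    (by norm_num : (1 / 3 : ℝ) < 1) (by norm_num : (0 : ℝ) < 1 / 100)),
    eventually_gt_atTop 1] with X hL hX
  have hX0 : 0 < X := by linarith
  rw [Real.rpow_one] at hL
  set L := log X
  have hlog : 0 < L := Real.log_pos hX
  have hfour : log 4 ≤ 3 := by linarith [Real.log_le_sub_one_of_pos (by norm_num : (0 : ℝ) < 4)]
  have hpoly : 4 * L ^ (1 / 3 : ℝ) ≤ exp (4 / 100 * L) := by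
    linarith [Real.add_one_le_exp (4 / 100 * L)]
  have hpow : (4 : ℝ) ^ (2 * L ^ (1 / 3 : ℝ)) ≤ exp (6 / 100 * L) := by
    rw [Real.rpow_def_of_pos (by norm_num), Real.exp_le_exp]
    have := mul_le_mul hfour hL (by positivity) (by norm_num)
    linarith
  calc 4 * L ^ (1 / 3 : ℝ) * 4 ^ (2 * L ^ (1 / 3 : ℝ)) * X ^ (1 / 5 : ℝ)
      ≤ exp (4 / 100 * L) * exp (6 / 100 * L) * exp (1 / 5 * L) := by
        rw [exp_mul_log hX0 (1 / 5)]
        gcongr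
    _ < exp (9 / 10 * (2 / 5) * L) := by
        rw [← Real.exp_add, ← Real.exp_add, Real.exp_lt_exp]
        linarith
    _ = (X ^ (9 / 10 : ℝ)) ^ (2 / 5 : ℝ) := by rw [← Real.rpow_mul hX0.le, exp_mul_log hX0]

theorem eventually_three_mul_log_rpow_le :
    ∀ᶠ X : ℝ in atTop, 3 * log X ^ (1 / 3 : ℝ) ≤ X := by
  filter_upwards [Real.tendsto_log_atTop.eventually (eventually_rpow_le_mul_rpow
    (by norm_num : (1 / 3 : ℝ) < 1) (by norm_num : (0 : ℝ) < 1 / 3)),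
    eventually_gt_atTop 0] with X hL hX
  rw [Real.rpow_one] at hL
  linarith [Real.log_le_sub_one_of_pos hX]

theorem sq_floor_rpow_one_tenth_le {X : ℝ} (hX : 1 ≤ X) :
    ((⌊X ^ (1 / 10 : ℝ)⌋₊ ^ 2 : ℕ) : ℝ) ≤ X := by
  calc ((⌊X ^ (1 / 10 : ℝ)⌋₊ ^ 2 : ℕ) : ℝ) = (⌊X ^ (1 / 10 : ℝ)⌋₊ : ℝ) ^ 2 := Nat.cast_pow _ _
    _ ≤ (X ^ (1 / 10 : ℝ)) ^ 2 := by
        gcongr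
        exact Nat.floor_le (by positivity)
    _ = X ^ (1 / 5 : ℝ) := by
        rw [← Real.rpow_mul_natCast (by linarith)]
        norm_num
    _ ≤ X := by simpa using Real.rpow_le_rpow_of_exponent_le hX (by norm_num : 1 / 5 ≤ (1 : ℝ))

theorem harmonic_le_one_add_log_of_le {N : ℕ} {y : ℝ} (hy : 1 ≤ y) (hN : (N : ℝ) ≤ y) :
    (harmonic N : ℝ) ≤ 1 + log y :=
  (harmonic_mono (Nat.le_floor hN)).trans (harmonic_floor_le_one_add_log y hy)

theorem sqrt_log_div_twelve_le_reciprocalSum_inP1 {X : ℝ} (hX : 1 ≤ X) :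
    √(log X) / 12 ≤ reciprocalSum InP1 ⌊X ^ (1 / 10 : ℝ)⌋₊ := by
  have hL : 0 ≤ log X := Real.log_nonneg hX
  have hlog : log X / 10 ≤ log (⌊X ^ (1 / 10 : ℝ)⌋₊ + 1) := by
    rw [div_eq_inv_mul, ← one_div, ← Real.log_rpow (by linarith)]
    exact Real.log_le_log (by positivity) (Nat.lt_floor_add_one _).le
  have hsqrt : √(log X) / 4 ≤ √(log (⌊X ^ (1 / 10 : ℝ)⌋₊ + 1)) := by
    refine Real.le_sqrt_of_sq_le ?_
    rw [div_pow, Real.sq_sqrt hL]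
    linarith
  linarith [sqrt_log_div_three_le_reciprocalSum_inP1 ⌊X ^ (1 / 10 : ℝ)⌋₊]

theorem rpow_nine_tenths_le_div {X m : ℝ} (hX : 0 < X) (hm : 0 < m) (hmX : m ≤ X ^ (1 / 10 : ℝ)) :
    X ^ (9 / 10 : ℝ) ≤ X / m := by
  rw [le_div_iff₀ hm]
  calc X ^ (9 / 10 : ℝ) * m ≤ X ^ (9 / 10 : ℝ) * X ^ (1 / 10 : ℝ) := by gcongr
    _ = X := by
        rw [← Real.rpow_add hX]
        norm_num

theorem exists_le_card_cofactorPrimes : ∃ c > 0, ∀ᶠ X : ℝ in atTop, ∀ (A m : ℕ) (B : ℤ),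
    0 < A → 3 * A ≤ X → 0 ≤ B → B ≤ X → 0 < m → m ≤ X ^ (1 / 10 : ℝ) →
      c * A * X / log X * (m : ℝ)⁻¹ ≤ #(cofactorPrimes X A B m) := by
  obtain ⟨c, hc, hcount⟩ := exists_le_card_primesIoc
  obtain ⟨Z₀, hZ₀⟩ := eventually_atTop.1 hcount
  refine ⟨c / 2, half_pos hc, ?_⟩
  filter_upwards [eventually_gt_atTop 1, (tendsto_rpow_atTop
    (by norm_num : (0 : ℝ) < 9 / 10)).eventually_ge_atTop Z₀] with X hX hXZ₀ A m B hA hAX hB hBX hm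
    hmX
  have hX0 : 0 < X := by linarith
  have hA1 : (1 : ℝ) ≤ A := Nat.one_le_cast.2 hA
  have hm1 : (1 : ℝ) ≤ m := Nat.one_le_cast.2 hm
  have : (0 : ℝ) ≤ B := Int.cast_nonneg hB
  have hXm : X ^ (9 / 10 : ℝ) ≤ A * X / m := by
    refine (rpow_nine_tenths_le_div hX0 (by linarith) hmX).trans ?_
    gcongr
    nlinarith
  have hZ1 : 1 < A * X / m := (Real.one_lt_rpow hX (by norm_num)).trans_le hXm
  have hlog : log (3 * (A * X / m)) ≤ 2 * log X := by
    have : A * X / m ≤ A * X := div_le_self (by positivity) hm1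
    calc log (3 * (A * X / m)) ≤ log (X ^ 2) := Real.log_le_log (by linarith) (by nlinarith)
      _ = 2 * log X := by rw [Real.log_pow, Nat.cast_ofNat]
  have hprimes := hZ₀ _ (hXZ₀.trans hXm) ((A * X + B) / m) (by positivity) (by
    rw [← mul_div_assoc]
    gcongr
    nlinarith)
  rw [cofactorPrimes, show (A * (2 * X) + B) / m = (A * X + B) / m + A * X / m by ring]
  refine le_trans ?_ hprimes
  calc c / 2 * A * X / log X * (m : ℝ)⁻¹ = c * (A * X / m) / (2 * log X) := by field_simp
    _ ≤ c * (A * X / m) / log (3 * (A * X / m)) := by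
        gcongr
        exact Real.log_pos (by linarith)

theorem exp_neg_mul_sqrt_log_le {c X x : ℝ} (hc : 0 ≤ c) (hX : 1 ≤ X)
    (hx : X ^ (9 / 10 : ℝ) ≤ x) : exp (-c * √(log x)) ≤ exp (-c * (9 / 10 * √(log X))) := by
  have hX0 : 0 < X := by linarith
  have hlog : 9 / 10 * log X ≤ log x := by
    rw [← Real.log_rpow hX0]
    exact Real.log_le_log (by positivity) hx
  have hL : 0 ≤ log X := Real.log_nonneg hX
  have hsqrt : 9 / 10 * √(log X) ≤ √(log x) := by
    refine Real.le_sqrt_of_sq_le ?_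
    rw [mul_pow, Real.sq_sqrt hL]
    linarith
  rw [Real.exp_le_exp, neg_mul, neg_mul]
  gcongr

theorem error_coefficient_le {c L : ℝ} {k : ℕ} (hc : 0 ≤ c) (hL : 17 ≤ L) (hk : 0 < k)
    (hkL : (k : ℝ) ≤ L ^ (1 / 5 : ℝ))
    (hpow : (1 + L) ^ (23 * k ^ 2) ≤ exp (3 / 20 * c * √L)) :
    2 * L ^ k * (3 * L ^ (1 / 3 : ℝ)) * (exp (c / 2 * √L) * exp (-c * (9 / 10 * √L)) +
      2 / exp (c / 2 * √L) * (1 + L) ^ (2 * (3 * k) ^ 2)) ≤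
        exp (-(c / 4) * √L) / (k * (1 + L)) := by
  have : (0 : ℝ) < k := Nat.cast_pos.2 hk
  have hrpow {s : ℝ} (hs : s ≤ 1) : L ^ s ≤ 1 + L :=
    (Real.rpow_le_rpow_of_exponent_le (by linarith) hs).trans (by rw [Real.rpow_one]; linarith)
  have hY : 1 ≤ 1 + L := by linarith
  have hmain : exp (c / 2 * √L) * exp (-c * (9 / 10 * √L)) = exp (-(2 / 5) * c * √L) := by
    rw [← Real.exp_add]
    ring_nf
  have htail : 2 / exp (c / 2 * √L) ≤ 2 * exp (-(2 / 5) * c * √L) := by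
    rw [div_eq_mul_inv, ← Real.exp_neg]
    gcongr
    nlinarith [mul_nonneg hc (Real.sqrt_nonneg L)]
  rw [le_div_iff₀ (by positivity), hmain]
  set E := exp (-(2 / 5) * c * √L) with hE
  set j := 2 * (3 * k) ^ 2 with hj
  have hj1 : 1 ≤ (1 + L) ^ j := one_le_pow₀ hY
  have hE0 : 0 < E := Real.exp_pos _
  have hsum : E + 2 / exp (c / 2 * √L) * (1 + L) ^ j ≤ 3 * E * (1 + L) ^ j := by
    nlinarith [mul_le_mul_of_nonneg_right htail (zero_le_one.trans hj1)]
  calc 2 * L ^ k * (3 * L ^ (1 / 3 : ℝ)) * (E + 2 / exp (c / 2 * √L) * (1 + L) ^ j) *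
        (k * (1 + L))
      ≤ 2 * (1 + L) ^ k * (3 * (1 + L)) * (3 * E * (1 + L) ^ j) * ((1 + L) * (1 + L)) := by
        gcongr
        · linarith
        · exact hrpow (by norm_num)
        · exact hkL.trans (hrpow (by norm_num))
    _ = 18 * (1 + L) ^ (3 + k + j) * E := by ring
    _ ≤ (1 + L) * (1 + L) ^ (3 + k + j) * E := by
        gcongr
        linarith
    _ ≤ (1 + L) ^ (23 * k ^ 2) * E := by
        rw [← pow_succ']
        gcongr
        rw [hj]
        nlinarith
    _ ≤ exp (3 / 20 * c * √L) * E := by gcongr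
    _ = exp (-(c / 4) * √L) := by
        rw [hE, ← Real.exp_add]
        ring_nf

theorem eventually_sieve_error_le {c : ℝ} (hc : 0 < c) : ∀ᶠ X : ℝ in atTop, ∀ k m N : ℕ, 0 < k →
    (k : ℝ) ≤ log X ^ (1 / 5 : ℝ) → 0 < m → m ≤ X ^ (1 / 10 : ℝ) → (N : ℝ) ≤ X →
    ∀ x, x = 3 * log X ^ (1 / 3 : ℝ) * X / m →
    2 * (log X ^ (k / 2 : ℝ)) ^ 2 * (exp (c / 2 * √(log X)) * (x * exp (-c * √(log x))) +
      2 * x / exp (c / 2 * √(log X)) * (harmonic N : ℝ) ^ (2 * (3 * k) ^ 2)) ≤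
        X * exp (-(c / 4) * √(log X)) / (k * (1 + log X)) * (m : ℝ)⁻¹ := by
  filter_upwards [eventually_gt_atTop 1, Real.tendsto_log_atTop.eventually_ge_atTop 17,
    Real.tendsto_log_atTop.eventually (eventually_one_add_pow_le_exp 23
      (by positivity : 0 < 3 / 20 * c))] with X hX hL hpow k m N hk hkL hm hmX hN x hx
  have hX0 : 0 < X := by linarith
  have hm0 : (0 : ℝ) < m := Nat.cast_pos.2 hm
  have hL3 : 1 ≤ log X ^ (1 / 3 : ℝ) := Real.one_le_rpow (by linarith) (by norm_num)
  have hx9 : X ^ (9 / 10 : ℝ) ≤ x := by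
    refine (rpow_nine_tenths_le_div hX0 hm0 hmX).trans ?_
    rw [hx]
    gcongr
    nlinarith
  have hx0 : 0 < x := (by positivity : 0 < X ^ (9 / 10 : ℝ)).trans_le hx9
  have hΛ : (log X ^ (k / 2 : ℝ)) ^ 2 = log X ^ k := by
    rw [← Real.rpow_mul_natCast (by linarith), Nat.cast_ofNat, div_mul_cancel₀ _ two_ne_zero,
      Real.rpow_natCast]
  have hexp := exp_neg_mul_sqrt_log_le hc.le hX.le hx9
  have hharm : (harmonic N : ℝ) ^ (2 * (3 * k) ^ 2) ≤ (1 + log X) ^ (2 * (3 * k) ^ 2) :=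
    pow_le_pow_left₀ ((reciprocalSum_nonneg _ _).trans (reciprocalSum_le_harmonic InP1 N))
      (harmonic_le_one_add_log_of_le hX.le hN) _
  have hcoeff := error_coefficient_le hc.le hL hk hkL (hpow k hkL)
  set L := log X
  calc 2 * (L ^ (k / 2 : ℝ)) ^ 2 * (exp (c / 2 * √L) * (x * exp (-c * √(log x))) +
        2 * x / exp (c / 2 * √L) * (harmonic N : ℝ) ^ (2 * (3 * k) ^ 2))
      ≤ 2 * L ^ k * (exp (c / 2 * √L) * (x * exp (-c * (9 / 10 * √L))) +
        2 * x / exp (c / 2 * √L) * (1 + L) ^ (2 * (3 * k) ^ 2)) := by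
        rw [hΛ]
        gcongr _ * (_ * (_ * ?_) + _ * ?_)
    _ = X * (m : ℝ)⁻¹ * (2 * L ^ k * (3 * L ^ (1 / 3 : ℝ)) *
        (exp (c / 2 * √L) * exp (-c * (9 / 10 * √L)) +
          2 / exp (c / 2 * √L) * (1 + L) ^ (2 * (3 * k) ^ 2))) := by
        rw [hx]
        ring
    _ ≤ X * (m : ℝ)⁻¹ * (exp (-(c / 4) * √L) / (k * (1 + L))) := by gcongr
    _ = X * exp (-(c / 4) * √L) / (k * (1 + L)) * (m : ℝ)⁻¹ := by ring

end Asymptotics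

section SieveSetup

open Finset
open Real (log exp)

/-- `g` and `A t + B` are the content and the primitive part of the polynomial `α t + β`. -/
structure IsPrimitivePart (α β : ℤ) (g A : ℕ) (B : ℤ) : Prop where
  leadingCoeff_eq : α = g * A
  constantCoeff_eq : β = g * B
  isCoprime : IsCoprime B A

theorem exists_isPrimitivePart {α : ℤ} (hα : 0 < α) (β : ℤ) :
    ∃ (g A : ℕ) (B : ℤ), IsPrimitivePart α β g A B := by
  have hgcd : 0 < Int.gcd α β := Int.gcd_pos_of_ne_zero_left β hα.ne'
  obtain ⟨A, B, hAB, hA, hB⟩ := Int.exists_gcd_one hgcd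
  have hA0 : 0 ≤ A := (pos_of_mul_pos_left (hA ▸ hα) (Int.natCast_nonneg _)).le
  lift A to ℕ using hA0
  exact ⟨Int.gcd α β, A, B, hA.trans (mul_comm _ _), hB.trans (mul_comm _ _),
    (Int.isCoprime_iff_gcd_eq_one.2 hAB).symm⟩

namespace IsPrimitivePart

variable {α β : ℤ} {g A : ℕ} {B : ℤ} (h : IsPrimitivePart α β g A B)
include h

theorem eval_eq (t : ℤ) : α * t + β = g * (A * t + B) := by
  rw [h.leadingCoeff_eq, h.constantCoeff_eq]
  ring

theorem content_pos (hα : 0 < α) : 0 < g := by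
  refine Nat.pos_of_ne_zero fun hg ↦ hα.ne' ?_
  rw [h.leadingCoeff_eq, hg, Nat.cast_zero, zero_mul]

theorem leadingCoeff_pos (hα : 0 < α) : 0 < A := by
  refine Nat.pos_of_ne_zero fun hA ↦ hα.ne' ?_
  rw [h.leadingCoeff_eq, hA, Nat.cast_zero, mul_zero]

theorem leadingCoeff_dvd : (A : ℤ) ∣ α := ⟨g, h.leadingCoeff_eq.trans (mul_comm _ _)⟩

theorem constantCoeff_pos (hβ : 0 < β) : 0 < B :=
  pos_of_mul_pos_right (h.constantCoeff_eq ▸ hβ) (Int.natCast_nonneg _)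

theorem constantCoeff_le (hβ : 0 < β) : B ≤ β :=
  Int.le_of_dvd hβ ⟨g, h.constantCoeff_eq.trans (mul_comm _ _)⟩

end IsPrimitivePart

/-- The level-of-distribution bound up to `Y` for moduli coprime to the exceptional prime `p₀`. -/
def HasLevelOfDistribution (c₀ Y : ℝ) (p₀ : ℕ) : Prop :=
  ∀ x : ℝ, 2 ≤ x → x ≤ Y →
    ∑ q ∈ (range (⌈x⌉₊ + 1)).filter
      (fun q : ℕ ↦ (q : ℝ) < x ^ (2 / 5 : ℝ) ∧ Nat.gcd q p₀ = 1), Eerr x q ≤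
        x * exp (-c₀ * √(log x))

theorem rpow_two_fifths_le_self {x : ℝ} (hx : 1 ≤ x) : x ^ (2 / 5 : ℝ) ≤ x := by
  simpa using Real.rpow_le_rpow_of_exponent_le hx (by norm_num : 2 / 5 ≤ (1 : ℝ))

theorem HasLevelOfDistribution.sum_le {c₀ Y x : ℝ} {p₀ Q : ℕ} {R : Finset ℕ}
    (h : HasLevelOfDistribution c₀ Y p₀) (hx : 2 ≤ x) (hxY : x ≤ Y) (hQ : 0 < Q)
    (hlt : ∀ r ∈ R, ((Q * r : ℕ) : ℝ) < x ^ (2 / 5 : ℝ))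
    (hcop : ∀ r ∈ R, (Q * r).Coprime p₀) :
    ∑ r ∈ R, Eerr x (Q * r) ≤ x * exp (-c₀ * √(log x)) := by
  rw [← sum_image (f := Eerr x) fun r _ r' _ ↦ Nat.eq_of_mul_eq_mul_left hQ]
  refine (sum_le_sum_of_subset_of_nonneg (image_subset_iff.2 fun r hr ↦ mem_filter.2
    ⟨mem_range.2 (Nat.lt_succ_of_le ?_), hlt r hr, hcop r hr⟩) fun q _ _ ↦ Eerr_nonneg x q).trans
    (h x hx hxY)
  exact_mod_cast ((hlt r hr).le.trans (rpow_two_fifths_le_self (by linarith))).trans (Nat.le_ceil x)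

/-- The hypotheses on the sieve: `a i * n + b i` are the linear functions `L_i`, `ν` counts the
local roots of their product, `W` is the sieve modulus with invertible residue class `v₀`, and `lam`
are the sieve coefficients `λ_d`. -/
structure IsSieveSetup (c₀ X : ℝ) {k : ℕ} (p₀ W : ℕ) (a b : Fin k → ℤ) (ν : ℕ → ℕ) (v₀ : ℤ)
    (lam : ℕ → ℝ) : Prop where
  card_pos : 0 < k
  card_le : (k : ℝ) ≤ log X ^ (1 / 5 : ℝ)
  prime : p₀.Prime
  ne_two : p₀ ≠ 2
  modulus_eq : W = sievePrimorial (2 * log X ^ (1 / 3 : ℝ)) p₀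
  admissible : ∀ p : ℕ, p.Prime → p % 4 = 3 → ∃ n : ℤ, Int.gcd (∏ i, (a i * n + b i)) p = 1
  leadingCoeff_pos : ∀ i, 0 < a i
  leadingCoeff_le : ∀ i, (a i : ℝ) ≤ log X ^ (1 / 3 : ℝ)
  gcd_leadingCoeff : ∀ i, Int.gcd (2 * p₀) (a i) = 1
  constantCoeff_pos : ∀ i, 0 < b i
  constantCoeff_lt : ∀ i, (b i : ℝ) < X
  localCount_eq : ∀ p : ℕ, p.Prime →
    ν p = ({n : ℕ | n < p ∧ (p : ℤ) ∣ ∏ i, (a i * (n : ℤ) + b i)}).ncard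
  gcd_residue : Int.gcd (∏ i, (a i * v₀ + b i)) W = 1
  coeff_eq_zero : ∀ d : ℕ, ¬ (Squarefree d ∧ (d : ℝ) < X ^ (1 / 10 : ℝ) ∧ InP3 d ∧
    d.Coprime (p₀ * W)) → lam d = 0
  abs_coeff_le : ∀ d : ℕ, |lam d| ≤ log X ^ (k / 2 : ℝ)
  level : HasLevelOfDistribution c₀ (3 * log X ^ (1 / 3 : ℝ) * X) p₀

namespace IsSieveSetup

variable {c₀ X : ℝ} {k p₀ W : ℕ} {a b : Fin k → ℤ} {ν : ℕ → ℕ} {v₀ : ℤ} {lam : ℕ → ℝ}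
  (h : IsSieveSetup c₀ X p₀ W a b ν v₀ lam)
include h

theorem modulus_pos : 0 < W := h.modulus_eq ▸ sievePrimorial_pos _ _

theorem inP3_modulus : InP3 W := h.modulus_eq ▸ inP3_sievePrimorial _ _

theorem coprime_modulus : p₀.Coprime W := h.modulus_eq ▸ coprime_sievePrimorial h.prime _

theorem modulus_le (hX : 1 ≤ X) : (W : ℝ) ≤ 4 ^ (2 * log X ^ (1 / 3 : ℝ)) := by
  have := Real.log_nonneg hX
  exact h.modulus_eq ▸ sievePrimorial_le_four_rpow (by positivity) p₀

theorem not_dvd_leadingCoeff {q : ℕ} (hq : q.Prime) (hq4 : q % 4 = 3) (hqW : ¬ q ∣ p₀ * W)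
    (i : Fin k) : ¬ (q : ℤ) ∣ a i := by
  intro hdvd
  have hle : (q : ℝ) ≤ a i := by exact_mod_cast Int.le_of_dvd (h.leadingCoeff_pos i) hdvd
  have ha : (0 : ℝ) < a i := Int.cast_pos.2 (h.leadingCoeff_pos i)
  refine hqW (Dvd.dvd.mul_left ?_ p₀)
  rw [h.modulus_eq, dvd_sievePrimorial_iff hq]
  refine ⟨by linarith [h.leadingCoeff_le i], hq4, ?_⟩
  rintro rfl
  exact hqW (dvd_mul_right q W)

theorem not_dvd_leadingCoeff_of_mem_primeFactors {d p : ℕ} (hd : InP3 d)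
    (hdW : d.Coprime (p₀ * W)) (hp : p ∈ d.primeFactors) (i : Fin k) : ¬ (p : ℤ) ∣ a i := by
  have hpp := Nat.prime_of_mem_primeFactors hp
  have hpd := Nat.dvd_of_mem_primeFactors hp
  exact h.not_dvd_leadingCoeff hpp (hd p hpp hpd)
    (hpp.coprime_iff_not_dvd.1 (hdW.coprime_dvd_left hpd)) i

theorem prod_ne_zero {n : ℤ} (hn : 0 < n) : ∏ i, (a i * n + b i) ≠ 0 :=
  prod_ne_zero_iff.2 fun i _ ↦
    (add_pos (mul_pos (h.leadingCoeff_pos i) hn) (h.constantCoeff_pos i)).ne'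

variable {i : Fin k} {g A : ℕ} {B : ℤ} (hp : IsPrimitivePart (a i) (b i) g A B)
include hp

omit h in
theorem primitivePart_dvd_prod (t : ℤ) : A * t + B ∣ ∏ j, (a j * t + b j) :=
  Dvd.dvd.trans ⟨g, (hp.eval_eq t).trans (mul_comm _ _)⟩
    (dvd_prod_of_mem (fun j ↦ a j * t + b j) (mem_univ i))

theorem coprime_two_mul : A.Coprime (2 * p₀) := by
  have := Int.isCoprime_iff_gcd_eq_one.2 (h.gcd_leadingCoeff i)
  exact (Nat.isCoprime_iff_coprime.1
    (by exact_mod_cast this.of_isCoprime_of_dvd_right hp.leadingCoeff_dvd)).symm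

theorem primitiveLeadingCoeff_le : (A : ℝ) ≤ log X ^ (1 / 3 : ℝ) :=
  le_trans (by exact_mod_cast Int.le_of_dvd (h.leadingCoeff_pos i) hp.leadingCoeff_dvd)
    (h.leadingCoeff_le i)

theorem primitiveConstantCoeff_le : (B : ℝ) ≤ X :=
  (Int.cast_le.2 (hp.constantCoeff_le (h.constantCoeff_pos i))).trans (h.constantCoeff_lt i).le

theorem inP1_content : InP1 g := by
  intro q hq hqg
  have hqg' : (q : ℤ) ∣ g := Int.natCast_dvd_natCast.2 hqg
  have htwo : q ≠ 2 := by
    rintro rfl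
    have hdvd := Int.dvd_coe_gcd (dvd_mul_right (2 : ℤ) p₀)
      (hp.leadingCoeff_eq ▸ Dvd.dvd.mul_right (by exact_mod_cast hqg) (A : ℤ))
    rw [h.gcd_leadingCoeff i] at hdvd
    norm_num at hdvd
  have hthree : q % 4 ≠ 3 := by
    intro hq4
    obtain ⟨n, hn⟩ := h.admissible q hq hq4
    have hdvd : (q : ℤ) ∣ ∏ j, (a j * n + b j) :=
      (hp.eval_eq n ▸ hqg'.mul_right _).trans
        (dvd_prod_of_mem (fun j ↦ a j * n + b j) (mem_univ i))
    exact hq.one_lt.ne' (Nat.dvd_one.1 (by exact_mod_cast hn ▸ Int.dvd_coe_gcd hdvd dvd_rfl))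
  have := hq.eq_two_or_odd
  omega

theorem coeff_eq_zero_of_notMem_sieveModuli {d : ℕ}
    (hd : d ∉ sieveModuli ⌊X ^ (1 / 10 : ℝ)⌋₊ (p₀ * (A * W))) : lam d = 0 := by
  refine h.coeff_eq_zero d fun ⟨hsq, hlt, hd3, hdW⟩ ↦ hd (mem_sieveModuli.2
    ⟨Nat.le_floor hlt.le, hsq, hd3, ?_⟩)
  have hdA : d.Coprime A := Nat.coprime_of_dvd fun q hq hqd hqA ↦
    h.not_dvd_leadingCoeff_of_mem_primeFactors hd3 hdW
      (Nat.mem_primeFactors.2 ⟨hq, hqd, hsq.ne_zero⟩) i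
      ((Int.natCast_dvd_natCast.2 hqA).trans hp.leadingCoeff_dvd)
  exact hdW.coprime_mul_right_right.mul_right (hdA.mul_right hdW.coprime_mul_left_right)

theorem card_unitRoots_add_one_and_le {d N : ℕ} (hd : d ∈ sieveModuli N (p₀ * (A * W))) {p : ℕ}
    (hpd : p ∈ d.primeFactors) :
    #(unitRoots (fun t ↦ ∏ j, (a j * t + b j)) (fun t ↦ A * t + B) p) + 1 = ν p ∧ ν p ≤ k := by
  obtain ⟨-, -, hd3, hdW⟩ := mem_sieveModuli.1 hd
  have hpp := Nat.prime_of_mem_primeFactors hpd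
  have hcoeff := h.not_dvd_leadingCoeff_of_mem_primeFactors hd3
    (hdW.coprime_dvd_right (mul_dvd_mul_left p₀ (dvd_mul_left W A))) hpd
  have hν : ν p = #{t ∈ range p | (p : ℤ) ∣ ∏ j, (a j * (t : ℕ) + b j)} := by
    rw [h.localCount_eq p hpp, ← Set.ncard_coe_finset]
    congr
    ext
    simp
  rw [hν]
  exact ⟨card_unitRoots_prime_add_one hpp
    (fun hA ↦ hcoeff i (hA.trans hp.leadingCoeff_dvd)) (primitivePart_dvd_prod hp),
    (card_roots_prod_linear_le a b hpp hcoeff).trans_eq (Fintype.card_fin k)⟩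

theorem four_mul_lt_rpow {x : ℝ} (hX : 1 < X) (hx : X ^ (9 / 10 : ℝ) ≤ x)
    (hsize : 4 * log X ^ (1 / 3 : ℝ) * 4 ^ (2 * log X ^ (1 / 3 : ℝ)) * X ^ (1 / 5 : ℝ) <
      (X ^ (9 / 10 : ℝ)) ^ (2 / 5 : ℝ)) {r : ℕ}
    (hr : r ∈ sieveModuli (⌊X ^ (1 / 10 : ℝ)⌋₊ ^ 2) (p₀ * (A * W))) :
    ((4 * (A * W * r) : ℕ) : ℝ) < x ^ (2 / 5 : ℝ) := by
  have hX0 : 0 < X := by linarith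
  have hrX : (r : ℝ) ≤ X ^ (1 / 5 : ℝ) := by
    calc (r : ℝ) ≤ (⌊X ^ (1 / 10 : ℝ)⌋₊ : ℝ) ^ 2 := by exact_mod_cast (mem_sieveModuli.1 hr).1
      _ ≤ (X ^ (1 / 10 : ℝ)) ^ 2 := by
          gcongr
          exact Nat.floor_le (by positivity)
      _ = X ^ (1 / 5 : ℝ) := by
          rw [← Real.rpow_mul_natCast hX0.le]
          norm_num
  have := Real.log_pos hX
  calc ((4 * (A * W * r) : ℕ) : ℝ) = 4 * A * W * r := by
        push_cast
        ring
    _ ≤ 4 * log X ^ (1 / 3 : ℝ) * 4 ^ (2 * log X ^ (1 / 3 : ℝ)) * X ^ (1 / 5 : ℝ) := by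
        gcongr
        · exact h.primitiveLeadingCoeff_le hp
        · exact h.modulus_le hX.le
    _ < (X ^ (9 / 10 : ℝ)) ^ (2 / 5 : ℝ) := hsize
    _ ≤ x ^ (2 / 5 : ℝ) := by gcongr

theorem sum_Eerr_le {x : ℝ} (hx2 : 2 ≤ x) (hxX : x ≤ 3 * log X ^ (1 / 3 : ℝ) * X) {N : ℕ}
    (hlt : ∀ r ∈ sieveModuli N (p₀ * (A * W)), ((4 * (A * W * r) : ℕ) : ℝ) < x ^ (2 / 5 : ℝ)) :
    ∑ r ∈ sieveModuli N (p₀ * (A * W)), Eerr x (4 * (A * W * r)) ≤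
      x * exp (-c₀ * √(log x)) := by
  have hA := hp.leadingCoeff_pos (h.leadingCoeff_pos i)
  have hAp := h.coprime_two_mul hp
  have hp₀ : Nat.Coprime 4 p₀ :=
    ((Nat.coprime_primes Nat.prime_two h.prime).2 h.ne_two.symm).pow_left 2
  have hassoc (r : ℕ) : 4 * (A * W * r) = 4 * (A * W) * r := (mul_assoc _ _ _).symm
  simp only [hassoc] at hlt ⊢
  refine h.level.sum_le hx2 hxX (mul_pos four_pos (mul_pos hA h.modulus_pos)) hlt fun r hr ↦ ?_
  exact (hp₀.mul_left (hAp.coprime_mul_left_right.mul_left h.coprime_modulus.symm)).mul_left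
    (mem_sieveModuli.1 hr).2.2.2.coprime_mul_right_right

end IsSieveSetup

end SieveSetup

section WeightedCount

open Finset
open Real (log exp)

open scoped Classical in
theorem sub_le_sum_ite_of_sub_le_sum_primeMultipleArgs {X κ R : ℝ} {A W g N : ℕ} {B v₀ : ℤ}
    {w : ℤ → ℝ} (hA : 0 < A) (hB : 0 ≤ B) (hW : 0 < W) (hW3 : InP3 W) (hg : 0 < g)
    (hg1 : InP1 g) (hN : (N : ℝ) * N ≤ X) (hw : ∀ n, 0 ≤ w n) (hκ : 0 ≤ κ) (hR : 0 ≤ R)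
    (hm : ∀ m : ℕ, 0 < m → m ≤ N → InP1 m → m.Coprime A →
      κ * A / (A * W).totient * (m : ℝ)⁻¹ - R * (m : ℝ)⁻¹ ≤
        ∑ n ∈ primeMultipleArgs X A W B v₀ m, w n) :
    κ / W.totient * reciprocalSum InP1 N - R * (harmonic N : ℝ) ≤
      ∑ n ∈ Icc (⌊X⌋ + 1) ⌊2 * X⌋ with n ≡ v₀ [ZMOD W],
        if IsSumTwoSquaresZ (g * (A * n + B)) then w n else 0 := by
  set σ := reciprocalSum (fun m ↦ InP1 m ∧ m.Coprime A) N with hσ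
  have hφW : (0 : ℝ) < W.totient := Nat.cast_pos.2 (Nat.totient_pos.2 hW)
  have hφAW : (0 : ℝ) < (A * W).totient := Nat.cast_pos.2 (Nat.totient_pos.2 (Nat.mul_pos hA hW))
  have hmain : κ / W.totient * reciprocalSum InP1 N ≤ κ * A / (A * W).totient * σ := by
    rw [div_mul_eq_mul_div, div_mul_eq_mul_div, div_le_div_iff₀ hφW hφAW]
    calc κ * reciprocalSum InP1 N * (A * W).totient
        = κ * ((A * W).totient * reciprocalSum InP1 N) := by ring
      _ ≤ κ * (A * W.totient * σ) :=
          mul_le_mul_of_nonneg_left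
            (totient_mul_reciprocalSum_inP1_le hA.ne' hW.ne' hW3 N) hκ
      _ = κ * A * σ * W.totient := by ring
  calc κ / W.totient * reciprocalSum InP1 N - R * (harmonic N : ℝ)
      ≤ κ * A / (A * W).totient * σ - R * σ :=
        sub_le_sub hmain (mul_le_mul_of_nonneg_left (reciprocalSum_le_harmonic _ N) hR)
    _ ≤ ∑ m ∈ Ioc 0 N with InP1 m ∧ m.Coprime A,
          ∑ n ∈ primeMultipleArgs X A W B v₀ m, w n := by
        rw [hσ, reciprocalSum_eq_sum_filter, mul_sum, mul_sum, ← sum_sub_distrib]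
        refine sum_le_sum fun m hmem ↦ ?_
        obtain ⟨hmN, hm1, hmA⟩ := mem_filter.1 hmem
        exact hm m (mem_Ioc.1 hmN).1 (mem_Ioc.1 hmN).2 hm1 hmA
    _ ≤ _ := sum_primeMultipleArgs_le hA hB hg hg1 hN hw

theorem sum_natCard_mul_eq_sum_sum_ite {k : ℕ} (P : Fin k → ℤ → Prop)
    [∀ i, DecidablePred (P i)] (S : Finset ℤ) (w : ℤ → ℝ) :
    ∑ n ∈ S, (Nat.card {i // P i n} : ℝ) * w n =
      ∑ i, ∑ n ∈ S, if P i n then w n else 0 := by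
  rw [sum_comm]
  refine sum_congr rfl fun n _ ↦ ?_
  rw [← sum_filter, sum_const, nsmul_eq_mul, Nat.card_eq_fintype_card, Fintype.card_subtype]

namespace IsSieveSetup

variable {c₀ X : ℝ} {k p₀ W : ℕ} {a b : Fin k → ℤ} {ν : ℕ → ℕ} {v₀ : ℤ} {lam : ℕ → ℝ}
  {i : Fin k} {g A m : ℕ} {B : ℤ}

theorem sub_le_sum_primeMultipleArgs (h : IsSieveSetup c₀ X p₀ W a b ν v₀ lam)
    (hp : IsPrimitivePart (a i) (b i) g A B) (hX : 1 < X) (hL : 1 ≤ log X)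
    (hsize : 4 * log X ^ (1 / 3 : ℝ) * 4 ^ (2 * log X ^ (1 / 3 : ℝ)) * X ^ (1 / 5 : ℝ) <
      (X ^ (9 / 10 : ℝ)) ^ (2 / 5 : ℝ))
    (hm : 0 < m) (hmX : m ≤ X ^ (1 / 10 : ℝ)) (hm1 : InP1 m) (hmA : m.Coprime A) {x T : ℝ}
    (hx : x = 3 * log X ^ (1 / 3 : ℝ) * X / m) (hT : 0 < T) :
    #(cofactorPrimes X A B m) / (2 * (A * W).totient) *
        sieveForm ν lam (range (⌊X ^ (1 / 10 : ℝ)⌋₊ + 1)) -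
      2 * (log X ^ (k / 2 : ℝ)) ^ 2 * (T * (x * exp (-c₀ * √(log x))) +
        2 * x / T * (harmonic (⌊X ^ (1 / 10 : ℝ)⌋₊ ^ 2) : ℝ) ^ (2 * (3 * k) ^ 2)) ≤
      ∑ n ∈ primeMultipleArgs X A W B v₀ m, sieveWeight lam (∏ j, (a j * n + b j)) := by
  have hX0 : 0 < X := by linarith
  have hm0 : (0 : ℝ) < m := Nat.cast_pos.2 hm
  have hL3 : 1 ≤ log X ^ (1 / 3 : ℝ) := Real.one_le_rpow hL (by norm_num)
  have hA := hp.leadingCoeff_pos (h.leadingCoeff_pos i)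
  have hAL := h.primitiveLeadingCoeff_le hp
  have hBX := h.primitiveConstantCoeff_le hp
  have hx3 : 3 * (X / m) ≤ x := by
    rw [hx, ← mul_div_assoc]
    gcongr
    linarith
  have hx9 := rpow_nine_tenths_le_div hX0 hm0 hmX
  have hx1 : 1 < X ^ (9 / 10 : ℝ) := Real.one_lt_rpow hX (by norm_num)
  have hlt (r : ℕ) (hr : r ∈ sieveModuli (⌊X ^ (1 / 10 : ℝ)⌋₊ ^ 2) (p₀ * (A * W))) :
      ((4 * (A * W * r) : ℕ) : ℝ) < x ^ (2 / 5 : ℝ) :=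
    h.four_mul_lt_rpow hp hX (by linarith) hsize hr
  have hxpow : x ^ (2 / 5 : ℝ) ≤ x := rpow_two_fifths_le_self (by linarith)
  have hxX : x ≤ 3 * log X ^ (1 / 3 : ℝ) * X :=
    hx ▸ div_le_self (by positivity) (Nat.one_le_cast.2 hm)
  have hsupport (d : ℕ) := h.coeff_eq_zero_of_notMem_sieveModuli hp (d := d)
  rw [sieveForm_of_subset ν (fun d hd ↦
    mem_range.2 (Nat.lt_succ_of_le (mem_sieveModuli.1 hd).1)) hsupport]
  refine sub_le_sum_sieveWeight_primeMultipleArgs hX0.le (PreservesModEq.prod fun j _ ↦ ?_)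
    (fun n hn ↦ h.prod_ne_zero ?_) hA (h.coprime_two_mul hp).coprime_mul_right_right
    (hp.constantCoeff_pos (h.constantCoeff_pos i)).le h.modulus_pos h.inP3_modulus hp.isCoprime
    ((Int.isCoprime_iff_gcd_eq_one.2 h.gcd_residue).of_isCoprime_of_dvd_left
      (primitivePart_dvd_prod hp v₀)) hm hm1 hmA (dvd_mul_left _ _) hsupport h.abs_coeff_le
    (fun r hr p hpr ↦ h.card_unitRoots_add_one_and_le hp hr hpr) ?_
    (fun r hr ↦ (hlt r hr).le.trans hxpow) hT (h.sum_Eerr_le hp (by linarith) hxX hlt)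
  · exact preservesModEq_linear (a j) (b j)
  · exact_mod_cast hX0.trans hn
  · rw [hx]
    gcongr
    nlinarith

end IsSieveSetup

end WeightedCount

section Main

open Filter Finset
open Real (log exp)

theorem exists_eventually_sub_le_sum_primeMultipleArgs {c₀ : ℝ} (hc₀ : 0 < c₀) :
    ∃ c > 0, ∀ᶠ X : ℝ in atTop, ∀ (k p₀ W : ℕ) (a b : Fin k → ℤ) (ν : ℕ → ℕ) (v₀ : ℤ)
      (lam : ℕ → ℝ), IsSieveSetup c₀ X p₀ W a b ν v₀ lam →
      ∀ Q, Q = sieveForm ν lam (range (⌊X ^ (1 / 10 : ℝ)⌋₊ + 1)) → 0 ≤ Q →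
      ∀ (i : Fin k) (g A : ℕ) (B : ℤ), IsPrimitivePart (a i) (b i) g A B →
      ∀ m : ℕ, 0 < m → m ≤ ⌊X ^ (1 / 10 : ℝ)⌋₊ → InP1 m → m.Coprime A →
        c * (X / log X) * Q * A / (A * W).totient * (m : ℝ)⁻¹ -
            X * exp (-(c₀ / 4) * √(log X)) / (k * (1 + log X)) * (m : ℝ)⁻¹ ≤
          ∑ n ∈ primeMultipleArgs X A W B v₀ m, sieveWeight lam (∏ j, (a j * n + b j)) := by
  obtain ⟨c, hc, hcard⟩ := exists_le_card_cofactorPrimes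
  refine ⟨c / 2, half_pos hc, ?_⟩
  filter_upwards [eventually_gt_atTop 1, Real.tendsto_log_atTop.eventually_ge_atTop 1,
    eventually_modulus_lt, hcard, eventually_sieve_error_le hc₀,
    eventually_three_mul_log_rpow_le] with X hX hL hsize hcard herr hlogX
    k p₀ W a b ν v₀ lam h Q hQ hQ0 i g A B hp m hm hmN hm1 hmA
  have : 0 < X := by linarith
  have hfloor : (⌊X ^ (1 / 10 : ℝ)⌋₊ : ℝ) ≤ X ^ (1 / 10 : ℝ) := Nat.floor_le (by positivity)
  have hmX : (m : ℝ) ≤ X ^ (1 / 10 : ℝ) := (Nat.cast_le.2 hmN).trans hfloor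
  have hcard := hcard A m B (hp.leadingCoeff_pos (h.leadingCoeff_pos i))
    (by linarith [h.primitiveLeadingCoeff_le hp])
    (hp.constantCoeff_pos (h.constantCoeff_pos i)).le (h.primitiveConstantCoeff_le hp) hm hmX
  have herr := herr k m (⌊X ^ (1 / 10 : ℝ)⌋₊ ^ 2) h.card_pos h.card_le hm hmX
    (sq_floor_rpow_one_tenth_le hX.le) _ rfl
  have hsum := h.sub_le_sum_primeMultipleArgs hp hX hL hsize hm hmX hm1 hmA rfl
    (Real.exp_pos (c₀ / 2 * √(log X)))
  refine le_trans (sub_le_sub ?_ herr) hsum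
  calc c / 2 * (X / log X) * Q * A / (A * W).totient * (m : ℝ)⁻¹
      = c * A * X / log X * (m : ℝ)⁻¹ / (2 * (A * W).totient) * Q := by ring
    _ ≤ #(cofactorPrimes X A B m) / (2 * (A * W).totient) * Q := by gcongr
    _ = _ := by rw [hQ]

open scoped Classical in
theorem exists_eventually_sub_le_sum_ite_isSumTwoSquaresZ {c₀ : ℝ} (hc₀ : 0 < c₀) :
    ∃ c > 0, ∀ᶠ X : ℝ in atTop, ∀ (k p₀ W : ℕ) (a b : Fin k → ℤ) (ν : ℕ → ℕ) (v₀ : ℤ)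
      (lam : ℕ → ℝ), IsSieveSetup c₀ X p₀ W a b ν v₀ lam →
      ∀ Q, Q = sieveForm ν lam (range (⌊X ^ (1 / 10 : ℝ)⌋₊ + 1)) → 0 ≤ Q → ∀ i : Fin k,
        c * (X / (W.totient * √(log X))) * Q - X * exp (-(c₀ / 4) * √(log X)) / k ≤
          ∑ n ∈ Icc (⌊X⌋ + 1) ⌊2 * X⌋ with n ≡ v₀ [ZMOD W],
            if IsSumTwoSquaresZ (a i * n + b i) then sieveWeight lam (∏ j, (a j * n + b j))
            else 0 := by
  obtain ⟨c, hc, hsum⟩ := exists_eventually_sub_le_sum_primeMultipleArgs hc₀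
  refine ⟨c / 12, by positivity, ?_⟩
  filter_upwards [eventually_gt_atTop 1, hsum] with X hX hsum k p₀ W a b ν v₀ lam h Q hQ hQ0 i
  obtain ⟨g, A, B, hp⟩ := exists_isPrimitivePart (h.leadingCoeff_pos i) (b i)
  set N := ⌊X ^ (1 / 10 : ℝ)⌋₊
  have hL : 0 < log X := Real.log_pos hX
  have hφ : (0 : ℝ) < W.totient := Nat.cast_pos.2 (Nat.totient_pos.2 h.modulus_pos)
  have hk : (0 : ℝ) < k := Nat.cast_pos.2 h.card_pos
  have hNX := sq_floor_rpow_one_tenth_le hX.le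
  have hharm : (harmonic N : ℝ) ≤ 1 + log X :=
    harmonic_le_one_add_log_of_le hX.le
      (le_trans (by exact_mod_cast Nat.le_self_pow two_ne_zero N) hNX)
  set E := exp (-(c₀ / 4) * √(log X))
  simp only [hp.eval_eq]
  refine le_trans ?_ (sub_le_sum_ite_of_sub_le_sum_primeMultipleArgs
    (w := fun n ↦ sieveWeight lam (∏ j, (a j * n + b j)))
    (hp.leadingCoeff_pos (h.leadingCoeff_pos i))
    (hp.constantCoeff_pos (h.constantCoeff_pos i)).le h.modulus_pos h.inP3_modulus
    (hp.content_pos (h.leadingCoeff_pos i)) (h.inP1_content hp)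
    (by exact_mod_cast (sq N).symm ▸ hNX) (fun n ↦ sq_nonneg _) (by positivity) (by positivity)
    (hsum k p₀ W a b ν v₀ lam h Q hQ hQ0 i g A B hp))
  refine sub_le_sub ?_ ?_
  · calc c / 12 * (X / (W.totient * √(log X))) * Q
        = c * (X / log X) * Q / W.totient * (√(log X) / 12) := by
          field_simp
          rw [Real.sq_sqrt hL.le, mul_comm]
      _ ≤ c * (X / log X) * Q / W.totient * reciprocalSum InP1 N := by
          gcongr
          exact sqrt_log_div_twelve_le_reciprocalSum_inP1 hX.le
  · calc X * E / (k * (1 + log X)) * (harmonic N : ℝ)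
        ≤ X * E / (k * (1 + log X)) * (1 + log X) := by gcongr
      _ = X * E / k := by field_simp

theorem sieve_weighted_count_of_sums_of_two_squares_general {c₀ : ℝ} (hc₀ : 0 < c₀) :
    ∃ c₁ > 0, ∃ c > 0, ∃ C > 0, ∀ᶠ X : ℝ in atTop, ∀ (k p₀ W : ℕ) (a b : Fin k → ℤ) (ν : ℕ → ℕ)
      (v₀ : ℤ) (lam : ℕ → ℝ), IsSieveSetup c₀ X p₀ W a b ν v₀ lam →
      c₁ * (X * k / (W.totient * log X ^ (1 / 2 : ℝ))) *
          sieveForm ν lam (range (⌊X ^ (1 / 10 : ℝ)⌋₊ + 1)) -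
        C * X * exp (-c * √(log X)) ≤
      ∑ n ∈ Icc (⌊X⌋ + 1) ⌊2 * X⌋ with n ≡ v₀ [ZMOD W],
        (Nat.card {i : Fin k // IsSumTwoSquaresZ (a i * n + b i)} : ℝ) *
          sieveWeight lam (∏ i, (a i * n + b i)) := by
  classical
  obtain ⟨c, hc, hsum⟩ := exists_eventually_sub_le_sum_ite_isSumTwoSquaresZ hc₀
  refine ⟨c, hc, c₀ / 4, by positivity, 1, one_pos, ?_⟩
  filter_upwards [eventually_gt_atTop 1, hsum] with X hX hsum k p₀ W a b ν v₀ lam h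
  have : 0 < X := by linarith
  have hL : 0 < log X := Real.log_pos hX
  have hk : (0 : ℝ) < k := Nat.cast_pos.2 h.card_pos
  rw [one_mul, ← Real.sqrt_eq_rpow]
  set Q := sieveForm ν lam (range (⌊X ^ (1 / 10 : ℝ)⌋₊ + 1)) with hQ
  set E := exp (-(c₀ / 4) * √(log X))
  rcases le_total 0 Q with hQ0 | hQ0
  · rw [sum_natCard_mul_eq_sum_sum_ite fun i n ↦ IsSumTwoSquaresZ (a i * n + b i)]
    calc c * (X * k / (W.totient * √(log X))) * Q - X * E
        = ∑ _ : Fin k, (c * (X / (W.totient * √(log X))) * Q - X * E / k) := by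
          rw [sum_const, card_univ, Fintype.card_fin, nsmul_eq_mul]
          field_simp
      _ ≤ _ := sum_le_sum fun i _ ↦ hsum k p₀ W a b ν v₀ lam h Q hQ hQ0 i
  · calc c * (X * k / (W.totient * √(log X))) * Q - X * E ≤ 0 :=
          sub_nonpos.2 ((mul_nonpos_of_nonneg_of_nonpos (by positivity) hQ0).trans
            (by positivity))
      _ ≤ _ := sum_nonneg fun n _ ↦ mul_nonneg (Nat.cast_nonneg _) (sq_nonneg _)

end Main

theorem sieve_weighted_count_of_sums_of_two_squares :
    ∀ c0 : ℝ, 0 < c0 → ∃ c1 : ℝ, 0 < c1 ∧ ∃ c : ℝ, 0 < c ∧ ∃ C : ℝ, 0 < C ∧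
    ∃ X0 : ℝ, ∀ X : ℝ, X0 ≤ X →
    ∀ (k p0 W : ℕ) (a b : Fin k → ℤ) (ν : ℕ → ℕ) (v0 : ℤ) (lam : ℕ → ℝ) (w : ℤ → ℝ),
    -- sieve setup
    0 < k → (k : ℝ) ≤ Real.log X ^ ((1 : ℝ) / 5) →
    p0.Prime → Real.log (Real.log X) / 2 ≤ (p0 : ℝ) → (p0 : ℝ) ≤ X →
    W = ∏ p ∈ (Finset.range (⌊2 * Real.log X ^ ((1 : ℝ) / 3)⌋₊ + 1)).filter
          (fun p : ℕ => p.Prime ∧ (p : ℝ) ≤ 2 * Real.log X ^ ((1 : ℝ) / 3) ∧ p % 4 = 3 ∧ p ≠ p0), p →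
    Function.Injective (fun i => (a i, b i)) →
    (∀ p : ℕ, p.Prime → p % 4 = 3 → ∃ n : ℤ, Int.gcd (∏ i, (a i * n + b i)) (p : ℤ) = 1) →
    (∀ i, 0 < a i ∧ (a i : ℝ) ≤ Real.log X ^ ((1 : ℝ) / 3) ∧
      Int.gcd (2 * (p0 : ℤ)) (a i) = 1 ∧ 0 < b i ∧ (b i : ℝ) < X) →
    (∀ p : ℕ, p.Prime →
      ν p = ({n : ℕ | n < p ∧ (p : ℤ) ∣ ∏ i, (a i * (n : ℤ) + b i)}).ncard) →
    Int.gcd (∏ i, (a i * v0 + b i)) (W : ℤ) = 1 →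
    (∀ d : ℕ, ¬(Squarefree d ∧ (d : ℝ) < X ^ ((1 : ℝ) / 10) ∧ InP3 d ∧
      Nat.Coprime d (p0 * W)) → lam d = 0) →
    (∀ d : ℕ, |lam d| ≤ Real.log X ^ ((k : ℝ) / 2)) →
    (∀ n : ℤ, w n = if n % (W : ℤ) = v0 % (W : ℤ) then
        (∑ d ∈ (∏ i, (a i * n + b i)).natAbs.divisors, lam d) ^ 2 else 0) →
    -- level-of-distribution hypothesis for p0
    (∀ x : ℝ, 2 ≤ x → x ≤ 3 * Real.log X ^ ((1 : ℝ) / 3) * X →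
      ∑ q ∈ (Finset.range (⌈x⌉₊ + 1)).filter
          (fun q : ℕ => (q : ℝ) < x ^ ((2 : ℝ) / 5) ∧ Nat.gcd q p0 = 1),
        Eerr x q ≤ x * Real.exp (-c0 * Real.sqrt (Real.log x))) →
    -- conclusion
    c1 * (X * (k : ℝ) / ((Nat.totient W : ℝ) * Real.log X ^ ((1 : ℝ) / 2))) *
        (∑ d ∈ Finset.range (⌊X ^ ((1 : ℝ) / 10)⌋₊ + 1),
          ∑ e ∈ Finset.range (⌊X ^ ((1 : ℝ) / 10)⌋₊ + 1),
            lam d * lam e * ∏ p ∈ (d * e).primeFactors, ((ν p : ℝ) - 1) / ((p : ℝ) - 1)) -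
      C * X * Real.exp (-c * Real.sqrt (Real.log X)) ≤
    ∑ n ∈ (Finset.Icc (⌊X⌋ + 1) ⌊2 * X⌋).filter (fun n => n % (W : ℤ) = v0 % (W : ℤ)),
      (Nat.card {i : Fin k // IsSumTwoSquaresZ (a i * n + b i)} : ℝ) * w n := by
  intro c0 hc0
  obtain ⟨c₁, hc₁, c, hc, C, hC, hsum⟩ :=
    sieve_weighted_count_of_sums_of_two_squares_general hc0
  obtain ⟨X₀, hX₀⟩ := Filter.eventually_atTop.1 (hsum.and
    ((Real.tendsto_log_atTop.comp Real.tendsto_log_atTop).eventually_gt_atTop 4))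
  refine ⟨c₁, hc₁, c, hc, C, hC, X₀, fun X hX k p0 W a b ν v0 lam w hk hkX hp0 hlog _ hW _ hadm hab
    hν hv0 hlam0 hlam hw hlevel ↦ ?_⟩
  obtain ⟨hsum, hlarge : 4 < Real.log (Real.log X)⟩ := hX₀ X hX
  have hp0_ne_two : p0 ≠ 2 := by
    rintro rfl
    push_cast at hlog
    linarith
  refine (hsum k p0 W a b ν v0 lam ⟨hk, hkX, hp0, hp0_ne_two, hW, hadm, fun i ↦ (hab i).1,
    fun i ↦ (hab i).2.1, fun i ↦ (hab i).2.2.1, fun i ↦ (hab i).2.2.2.1,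
    fun i ↦ (hab i).2.2.2.2, hν, hv0, hlam0, hlam, hlevel⟩).trans_eq
    (Finset.sum_congr rfl fun n hn ↦ ?_)
  rw [hw n, if_pos (Finset.mem_filter.1 hn).2, sieveWeight]
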